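/- arXiv:1905.04131 — 3 statements merged into one kernel-verified Lean document; each statement's English description precedes it below -/
import Mathlib

section
/- Every generalized Stieltjes function of order 2 is logarithmically completely monotonic; that is, if f(x) = ∫_0^∞ (x+t)^{-2} dμ(t) + c for x > 0, where μ is a positive measure on [0,∞) making the integral converge and c ≥ 0, and f is not identically 0, then -f'(x)/f(x) is completely monotonic on (0,∞). -/
open MeasureTheory Filter Set

/-- The Laplace transform of `g`. -/
noncomputable def LaplaceTransform (g : ℝ → ℝ) (x : ℝ) : ℝ :=
  ∫ t in Set.Ioi (0:ℝ), Real.exp (-x * t) * g t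

/-- `f` is completely monotonic on `(0,∞)`. -/
def CompletelyMonotonic (f : ℝ → ℝ) : Prop :=
  (∀ x : ℝ, 0 < x → ContDiffAt ℝ (⊤ : ℕ∞) f x) ∧
  ∀ (n : ℕ) (x : ℝ), 0 < x → 0 ≤ (-1 : ℝ) ^ n * iteratedDeriv n f x

/-- `f` is logarithmically completely monotonic on `(0,∞)`. -/
def LogCompletelyMonotonic (f : ℝ → ℝ) : Prop :=
  (∀ x : ℝ, 0 < x → 0 < f x) ∧ (∀ x : ℝ, 0 < x → ContDiffAt ℝ (⊤ : ℕ∞) f x) ∧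
  CompletelyMonotonic (fun x => -deriv f x / f x)

/-- `f` is a generalized Stieltjes function of order `lam` on `(0,∞)`. -/
def IsGenStieltjes (lam : ℝ) (f : ℝ → ℝ) : Prop :=
  ∃ (μ : Measure ℝ) (c : ℝ), 0 ≤ c ∧ μ (Set.Iio 0) = 0 ∧
    ∀ x : ℝ, 0 < x →
      Integrable (fun t => (x + t) ^ (-lam)) μ ∧
      f x = (∫ t, (x + t) ^ (-lam) ∂μ) + c

/-- Nielsen's beta function. -/
noncomputable def nielsenBeta (x : ℝ) : ℝ :=
  ∫ t in Set.Ioi (0:ℝ), Real.exp (-x * t) / (1 + Real.exp (-t))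

/-!
For `f(x) = c + ∑ pᵢ / (x - aᵢ)²` with `c, pᵢ > 0`, the zeros `w` of `f` in one open half plane are
eigenvalues of an operator `X` with `X† + X = 2 diag(a)`. Triangularizing `X` by Gram–Schmidt writes
the real parts `Re w` as the images of the poles `aᵢ` under a substochastic matrix, so Jensen's
inequality gives `∑ |x - w|⁻ᵏ ≤ ∑ (x - aᵢ)⁻ᵏ` for `x` to the right of all poles. If the zeros are
simple, this is exactly what bounds the derivatives of `-f'/f = ∑ 2 / (x - aᵢ) - ∑ 1 / (x - w)`.

Multiple zeros occur for finitely many `c` only. At a fixed point, the derivatives of `-f'/f` depend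
continuously on those of `f`, and for a general measure the latter lie in the closed convex cone
spanned by the derivatives of the functions `(x + t)⁻²` with `t ≥ 0`.
-/

open scoped ComplexConjugate InnerProductSpace Topology

section Substochastic

variable {ι κ : Type*} [Fintype ι] [Fintype κ]

theorem sum_map_sum_le_of_substochastic {s : Set ℝ} {φ : ℝ → ℝ} (hφ : ConvexOn ℝ s φ)
    {M : κ → ι → ℝ} (hM : ∀ j i, 0 ≤ M j i) (hrow : ∀ j, ∑ i, M j i = 1)
    (hcol : ∀ i, ∑ j, M j i ≤ 1) {a : ι → ℝ} (ha : ∀ i, a i ∈ s) (hφa : ∀ i, 0 ≤ φ (a i)) :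
    ∑ j, φ (∑ i, M j i * a i) ≤ ∑ i, φ (a i) :=
  calc ∑ j, φ (∑ i, M j i * a i)
      ≤ ∑ j, ∑ i, M j i * φ (a i) := Finset.sum_le_sum fun j _ =>
        hφ.map_sum_le (fun i _ => hM j i) (hrow j) fun i _ => ha i
    _ = ∑ i, (∑ j, M j i) * φ (a i) := by rw [Finset.sum_comm]; simp only [Finset.sum_mul]
    _ ≤ ∑ i, φ (a i) := Finset.sum_le_sum fun i _ => mul_le_of_le_one_left (hφa i) (hcol i)

end Substochastic

section Lyapunov

variable {𝕜 E κ : Type*} [RCLike 𝕜] [NormedAddCommGroup E] [InnerProductSpace 𝕜 E]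

/-- The Lyapunov equation `X† + X = 2 A`, tested on vectors `v j` that are thought of as
eigenvectors of `X` with eigenvalues `w j`. The operator `X` itself is not part of the data: it
would be determined on the span of the `v j` only. -/
def IsLyapunovEigensystem (A : E →ₗ[𝕜] E) (v : κ → E) (w : κ → 𝕜) : Prop :=
  ∀ j k, (conj (w j) + w k) * ⟪v j, v k⟫_𝕜 = 2 * ⟪v j, A (v k)⟫_𝕜

namespace IsLyapunovEigensystem

variable {A : E →ₗ[𝕜] E}

theorem inner_sum_add_inner_sum [Fintype κ] {v : κ → E} {w : κ → 𝕜}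
    (h : IsLyapunovEigensystem A v w) (g g' : κ → 𝕜) :
    ⟪∑ j, (g j * w j) • v j, ∑ k, g' k • v k⟫_𝕜 + ⟪∑ j, g j • v j, ∑ k, (g' k * w k) • v k⟫_𝕜
      = 2 * ⟪∑ j, g j • v j, A (∑ k, g' k • v k)⟫_𝕜 := by
  simp only [map_sum, map_smul, sum_inner, inner_sum, inner_smul_left, inner_smul_right, map_mul,
    Finset.mul_sum, ← Finset.sum_add_distrib]
  refine Finset.sum_congr rfl fun k _ => Finset.sum_congr rfl fun j _ => ?_
  linear_combination conj (g j) * g' k * h j k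

variable {n : ℕ} {v : Fin n → E} {w : Fin n → 𝕜}

/-- If `y = ∑ g j • v j` vanishes, testing the equation on `y` and `X² y` gives `‖X y‖² = 0`. Hence
all `Xᵐ y` vanish, and a Vandermonde argument separates the terms. -/
theorem linearIndependent (h : IsLyapunovEigensystem A v w) (hw : Function.Injective w)
    (hv : ∀ j, v j ≠ 0) : LinearIndependent 𝕜 v := by
  rw [Fintype.linearIndependent_iff]
  intro g hg j
  have sum_pow_eq_zero : ∀ m : ℕ, ∑ k, (g k * w k ^ m) • v k = 0 := by
    intro m
    induction m with
    | zero => simpa using hg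
    | succ m ih =>
      have key := h.inner_sum_add_inner_sum (fun k => g k * w k ^ m) fun k => g k * w k ^ (m + 1)
      simp only [ih, inner_zero_left, mul_zero, add_zero, mul_assoc, ← pow_succ] at key
      exact inner_self_eq_zero.mp key
  have inner_eq_zero : (fun k => g k * ⟪v j, v k⟫_𝕜) = 0 := by
    refine Matrix.eq_zero_of_forall_pow_sum_mul_pow_eq_zero hw fun m => ?_
    have key := congrArg (⟪v j, ·⟫_𝕜) (sum_pow_eq_zero m)
    simp only [inner_sum, inner_smul_right, inner_zero_right] at key
    rw [← key]
    exact Finset.sum_congr rfl fun k _ => by ring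
  exact (mul_eq_zero.mp (congrFun inner_eq_zero j)).resolve_right (inner_self_ne_zero.mpr (hv j))

/-- Gram–Schmidt puts `X` into triangular form with diagonal entries `w j`. -/
theorem re_eq_re_inner_gramSchmidtNormed (h : IsLyapunovEigensystem A v w)
    (hv : LinearIndependent 𝕜 v) (j : Fin n) :
    RCLike.re (w j) = RCLike.re ⟪InnerProductSpace.gramSchmidtNormed 𝕜 v j,
      A (InnerProductSpace.gramSchmidtNormed 𝕜 v j)⟫_𝕜 := by
  set u := InnerProductSpace.gramSchmidtNormed 𝕜 v with hu
  have u_norm : ⟪u j, u j⟫_𝕜 = 1 := by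
    rw [inner_self_eq_norm_sq_to_K, (InnerProductSpace.gramSchmidtNormed_orthonormal hv).1 j]
    simp
  have u_perp : ∀ k < j, ⟪u j, v k⟫_𝕜 = 0 := fun k hk => by
    rw [hu, InnerProductSpace.gramSchmidtNormed, inner_smul_left,
      InnerProductSpace.gramSchmidt_inv_triangular 𝕜 v hk, mul_zero]
  obtain ⟨g, hg⟩ : ∃ g : Fin n → 𝕜, ∑ k ∈ Finset.Iic j, g k • v k = u j := by
    rw [← Submodule.mem_span_image_finset_iff_exists_fun', Finset.coe_Iic]
    exact Submodule.smul_mem _ _ (InnerProductSpace.gramSchmidt_mem_span 𝕜 v le_rfl)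
  set b : Fin n → 𝕜 := fun k => if k ≤ j then g k else 0 with hb
  have u_eq : u j = ∑ k, b k • v k := by
    rw [← hg, ← Finset.sum_subset (Finset.subset_univ (Finset.Iic j))]
    · exact Finset.sum_congr rfl fun k hk => by
        simp only [hb, if_pos (Finset.mem_Iic.mp hk)]
    · exact fun k _ hk => by
        simp only [hb, if_neg (show ¬k ≤ j by simpa using hk), zero_smul]
  have diag : ⟪u j, ∑ k, (b k * w k) • v k⟫_𝕜 = w j := by
    have diag_term : ∀ k, ⟪u j, (b k * w k) • v k⟫_𝕜 = w j * ⟪u j, b k • v k⟫_𝕜 := fun k => by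
      rcases lt_trichotomy k j with hkj | rfl | hkj
      · simp [inner_smul_right, u_perp k hkj]
      · simp only [inner_smul_right]; ring
      · simp [hb, hkj.not_ge]
    rw [inner_sum, Finset.sum_congr rfl fun k _ => diag_term k, ← Finset.mul_sum, ← inner_sum,
      ← u_eq, u_norm, mul_one]
  have key := h.inner_sum_add_inner_sum b b
  rw [← u_eq, diag, ← inner_conj_symm, diag, add_comm, RCLike.add_conj] at key
  rw [← mul_left_cancel₀ two_ne_zero key, RCLike.ofReal_re]

theorem exists_orthonormal_re_eq [Finite κ] {v : κ → E} {w : κ → 𝕜}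
    (h : IsLyapunovEigensystem A v w) (hw : Function.Injective w) (hv : ∀ j, v j ≠ 0) :
    ∃ u : κ → E, Orthonormal 𝕜 u ∧ ∀ j, RCLike.re (w j) = RCLike.re ⟪u j, A (u j)⟫_𝕜 := by
  let e := Finite.equivFin κ
  have h' : IsLyapunovEigensystem A (v ∘ e.symm) (w ∘ e.symm) := fun j k => h _ _
  have hli := h'.linearIndependent (hw.comp e.symm.injective) fun j => hv _
  refine ⟨_, (InnerProductSpace.gramSchmidtNormed_orthonormal hli).comp e e.injective, fun j => ?_⟩
  simpa using h'.re_eq_re_inner_gramSchmidtNormed hli (e j)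

end IsLyapunovEigensystem

end Lyapunov

section InverseSquareSum

variable {ι κ : Type*} [Fintype ι] {a p : ι → ℝ} {c : ℝ}

theorem isLyapunovEigensystem_of_add_sum_div_sq_eq_zero [DecidableEq ι] {w : κ → ℂ}
    (hp : ∀ i, 0 ≤ p i) (hw : ∀ j, (c : ℂ) + ∑ i, p i / (w j - a i) ^ 2 = 0)
    (hconj : ∀ j k, conj (w j) ≠ w k) :
    IsLyapunovEigensystem (Matrix.toEuclideanLin (Matrix.diagonal fun i => (a i : ℂ)))
      (fun j => WithLp.toLp 2 fun i => (√(p i) : ℂ) / (w j - a i) ^ 2) w := by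
  intro j k
  have ne_pole : ∀ j i, w j - a i ≠ 0 := fun j i h =>
    hconj j j (by rw [sub_eq_zero.mp h, Complex.conj_ofReal])
  have conj_ne_pole : ∀ i, conj (w j) - a i ≠ 0 := fun i h =>
    ne_pole j i (by simpa using congrArg conj h)
  have hw_conj : (c : ℂ) + ∑ i, p i / (conj (w j) - a i) ^ 2 = 0 := by
    simpa using congrArg conj (hw j)
  have sqrt_mul_self : ∀ i, (√(p i) : ℂ) * √(p i) = p i := fun i => by
    rw [← Complex.ofReal_mul, Real.mul_self_sqrt (hp i)]
  refine mul_left_cancel₀ (sub_ne_zero.mpr (hconj j k).symm) ?_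
  simp only [PiLp.inner_apply, RCLike.inner_apply, Matrix.toLpLin_apply, Matrix.mulVec_diagonal,
    Finset.mul_sum, map_div₀, map_pow, map_sub, Complex.conj_ofReal]
  rw [← sub_eq_zero, ← Finset.sum_sub_distrib, ← sub_self (0 : ℂ)]
  nth_rw 1 [← hw_conj, ← hw k]
  rw [add_sub_add_left_eq_sub, ← Finset.sum_sub_distrib]
  refine Finset.sum_congr rfl fun i _ => ?_
  have h₁ := ne_pole k i
  have h₂ := conj_ne_pole i
  rw [← sqrt_mul_self]
  field_simp
  ring

theorem exists_substochastic_re_eq [Fintype κ] {w : κ → ℂ} (hp : ∀ i, 0 < p i) (hc : c ≠ 0)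
    (hw : ∀ j, (c : ℂ) + ∑ i, p i / (w j - a i) ^ 2 = 0) (hinj : Function.Injective w)
    (hconj : ∀ j k, conj (w j) ≠ w k) :
    ∃ M : κ → ι → ℝ, (∀ j i, 0 ≤ M j i) ∧ (∀ j, ∑ i, M j i = 1) ∧ (∀ i, ∑ j, M j i ≤ 1) ∧
      ∀ j, (w j).re = ∑ i, M j i * a i := by
  classical
  have v_ne_zero : ∀ j, WithLp.toLp 2 (fun i => (√(p i) : ℂ) / (w j - a i) ^ 2) ≠ 0 := by
    intro j h
    have term_eq_zero : ∀ i, (p i : ℂ) / (w j - a i) ^ 2 = 0 := fun i => by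
      simpa [(hp i).ne', Real.sqrt_eq_zero', (hp i).not_ge] using
        congrArg (fun v : EuclideanSpace ℂ ι => v i) h
    exact hc (by simpa [term_eq_zero] using hw j)
  obtain ⟨u, u_orthonormal, re_eq⟩ := (isLyapunovEigensystem_of_add_sum_div_sq_eq_zero
    (fun i => (hp i).le) hw hconj).exists_orthonormal_re_eq hinj v_ne_zero
  refine ⟨fun j i => ‖u j i‖ ^ 2, fun _ _ => by positivity, fun j => ?_, fun i => ?_, fun j => ?_⟩
  · rw [← EuclideanSpace.norm_sq_eq, u_orthonormal.1 j, one_pow]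
  · simpa [EuclideanSpace.inner_single_right] using
      u_orthonormal.sum_inner_products_le (EuclideanSpace.single i (1 : ℂ)) (s := Finset.univ)
  · have inner_eq : ⟪u j, Matrix.toEuclideanLin (Matrix.diagonal fun i => (a i : ℂ)) (u j)⟫_ℂ
        = ((∑ i, ‖u j i‖ ^ 2 * a i : ℝ) : ℂ) := by
      simp only [PiLp.inner_apply, RCLike.inner_apply, Matrix.toLpLin_apply,
        Matrix.mulVec_diagonal, Complex.ofReal_sum, Complex.ofReal_mul, Complex.ofReal_pow,
        ← Complex.mul_conj']
      exact Finset.sum_congr rfl fun i _ => by ring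
    exact (re_eq j).trans (by rw [inner_eq]; exact Complex.ofReal_re _)

theorem convexOn_inv_sub_pow (x : ℝ) (k : ℕ) :
    ConvexOn ℝ (Iio x) fun t => ((x - t) ^ k)⁻¹ := by
  have h := (convexOn_zpow (𝕜 := ℝ) (-k : ℤ)).comp_affineMap
    (AffineMap.const ℝ ℝ x - AffineMap.id ℝ ℝ)
  refine (h.subset (fun t ht => ?_) (convex_Iio x)).congr fun t _ => ?_
  · simpa using ht
  · simp

theorem sum_inv_norm_sub_pow_le [Fintype κ] {w : κ → ℂ} (hp : ∀ i, 0 < p i) (hc : c ≠ 0)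
    (hw : ∀ j, (c : ℂ) + ∑ i, p i / (w j - a i) ^ 2 = 0) (hinj : Function.Injective w)
    (hconj : ∀ j k, conj (w j) ≠ w k) {x : ℝ} (hx : ∀ i, a i < x) (k : ℕ) :
    ∑ j, (‖x - w j‖ ^ k)⁻¹ ≤ ∑ i, ((x - a i) ^ k)⁻¹ := by
  obtain ⟨M, hM, hrow, hcol, re_eq⟩ := exists_substochastic_re_eq hp hc hw hinj hconj
  have re_lt : ∀ j, (w j).re < x := fun j => by
    rw [re_eq]
    exact (convex_Iio x).sum_mem (fun i _ => hM j i) (hrow j) fun i _ => hx i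
  have sub_re_le : ∀ j, x - (w j).re ≤ ‖x - w j‖ := fun j => by
    simpa using Complex.re_le_norm (x - w j)
  calc ∑ j, (‖x - w j‖ ^ k)⁻¹
      ≤ ∑ j, ((x - (w j).re) ^ k)⁻¹ := Finset.sum_le_sum fun j _ => by
        have := sub_pos.mpr (re_lt j)
        gcongr
        exact sub_re_le j
    _ = ∑ j, ((x - ∑ i, M j i * a i) ^ k)⁻¹ := by simp only [re_eq]
    _ ≤ ∑ i, ((x - a i) ^ k)⁻¹ :=
        sum_map_sum_le_of_substochastic (convexOn_inv_sub_pow x k) hM hrow hcol hx fun i =>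
          inv_nonneg.mpr (pow_nonneg (sub_nonneg.mpr (hx i).le) k)

theorem im_ne_zero_of_add_sum_div_sq_eq_zero (hp : ∀ i, 0 ≤ p i) (hc : 0 < c) {z : ℂ}
    (hz : (c : ℂ) + ∑ i, p i / (z - a i) ^ 2 = 0) : z.im ≠ 0 := by
  intro him
  obtain ⟨r, rfl⟩ : ∃ r : ℝ, (r : ℂ) = z := ⟨z.re, Complex.ext rfl him.symm⟩
  have hsum : 0 ≤ ∑ i, p i / (r - a i) ^ 2 :=
    Finset.sum_nonneg fun i _ => div_nonneg (hp i) (sq_nonneg _)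
  exact (add_pos_of_pos_of_nonneg hc hsum).ne' (by exact_mod_cast hz)

/-- The zeros are not real, and those in either open half plane satisfy
`sum_inv_norm_sub_pow_le`. -/
theorem sum_inv_norm_sub_pow_le_two_mul (hp : ∀ i, 0 < p i) (hc : 0 < c) {S : Finset ℂ}
    (hS : ∀ z ∈ S, (c : ℂ) + ∑ i, p i / (z - a i) ^ 2 = 0) {x : ℝ} (hx : ∀ i, a i < x) (k : ℕ) :
    ∑ z ∈ S, (‖x - z‖ ^ k)⁻¹ ≤ 2 * ∑ i, ((x - a i) ^ k)⁻¹ := by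
  have half_plane_le : ∀ T ⊆ S, (∀ z ∈ T, ∀ w ∈ T, conj z ≠ w) →
      ∑ z ∈ T, (‖x - z‖ ^ k)⁻¹ ≤ ∑ i, ((x - a i) ^ k)⁻¹ := fun T hT hconj => by
    rw [← Finset.sum_coe_sort]
    exact sum_inv_norm_sub_pow_le hp hc.ne' (fun z : T => hS z (hT z.2)) Subtype.val_injective
      (fun z w => hconj z z.2 w w.2) hx k
  rw [← Finset.sum_filter_add_sum_filter_not S (0 < ·.im), two_mul]
  refine add_le_add (half_plane_le _ (Finset.filter_subset _ _) ?_)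
    (half_plane_le _ (Finset.filter_subset _ _) ?_)
  · rintro z hz w hw rfl
    have hz' := (Finset.mem_filter.mp hz).2
    have hw' := (Finset.mem_filter.mp hw).2
    rw [Complex.conj_im] at hw'
    linarith
  · rintro z hz w hw rfl
    have him := im_ne_zero_of_add_sum_div_sq_eq_zero (fun i => (hp i).le) hc
      (hS z (Finset.mem_filter.mp hz).1)
    have hz' := (Finset.mem_filter.mp hz).2
    have hw' := (Finset.mem_filter.mp hw).2
    rw [Complex.conj_im] at hw'
    exact him (by linarith)

end InverseSquareSum

section Polynomial

open Polynomial

theorem finite_setOf_not_nodup_roots_add_C_mul {K : Type*} [Field K] [CharZero K] {P Q : K[X]}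
    (hPQ : IsCoprime P Q) : {c | ¬(P + C c * Q).roots.Nodup}.Finite := by
  classical
  by_cases hW : P.wronskian Q = 0
  · obtain ⟨hP, hQ⟩ := hPQ.wronskian_eq_zero_iff.mp hW
    have hempty : {c | ¬(P + C c * Q).roots.Nodup} = ∅ := by
      refine eq_empty_of_forall_notMem fun c hc => hc ?_
      have hdeg : (P + C c * Q).natDegree = 0 :=
        derivative_eq_zero.mp (by simp [hP, hQ])
      rw [eq_C_of_natDegree_eq_zero hdeg, roots_C]
      exact Multiset.nodup_zero
    exact hempty ▸ finite_empty
  refine ((P.wronskian Q).roots.toFinset.finite_toSet.image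
    fun z => -P.eval z / Q.eval z).subset fun c hc => ?_
  obtain ⟨z, hz⟩ : ∃ z, 1 < (P + C c * Q).rootMultiplicity z := by
    simpa [Multiset.nodup_iff_count_le_one] using hc
  have hne : P + C c * Q ≠ 0 := fun h => by simp [h] at hz
  obtain ⟨root, root_deriv⟩ := (one_lt_rootMultiplicity_iff_isRoot hne).mp hz
  simp only [IsRoot, eval_add, eval_mul, eval_C, derivative_add, derivative_C_mul]
    at root root_deriv
  have hQz : Q.eval z ≠ 0 := fun h => by
    have hPz : P.eval z = 0 := by simpa [h] using root
    exact (hPQ.map (evalRingHom z)).ne_zero_or_ne_zero.elim (· hPz) (· h)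
  refine ⟨z, ?_, ?_⟩
  · rw [Finset.mem_coe, Multiset.mem_toFinset, mem_roots hW, IsRoot, wronskian, eval_sub, eval_mul,
      eval_mul]
    linear_combination (derivative Q).eval z * root - Q.eval z * root_deriv
  · rw [div_eq_iff hQz]
    linear_combination -root

theorem neg_div_eq_sum_roots_sub_sum_roots {f : ℝ → ℝ} {f' x : ℝ} {P Q : ℂ[X]}
    (hf : HasDerivAt f f' x) (hPQ : ∀ᶠ y : ℝ in 𝓝 x, P.eval (y : ℂ) = Q.eval (y : ℂ) * f y)
    (hQ : Q.eval (x : ℂ) ≠ 0) (hfx : f x ≠ 0) :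
    ((-f' / f x : ℝ) : ℂ)
      = (Q.roots.map fun r => (x - r : ℂ)⁻¹).sum - (P.roots.map fun r => (x - r : ℂ)⁻¹).sum := by
  have hfx' : (f x : ℂ) ≠ 0 := by exact_mod_cast hfx
  have hP : P.eval (x : ℂ) ≠ 0 := hPQ.self_of_nhds ▸ mul_ne_zero hQ hfx'
  have deriv_eq : (derivative P).eval (x : ℂ)
      = (derivative Q).eval (x : ℂ) * f x + Q.eval (x : ℂ) * f' :=
    ((P.hasDerivAt (x : ℂ)).comp_ofReal.congr_of_eventuallyEq (hPQ.mono fun _ => Eq.symm)).unique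
      ((Q.hasDerivAt (x : ℂ)).comp_ofReal.mul hf.ofReal_comp)
  simp only [← one_div]
  rw [← (IsAlgClosed.splits P).eval_derivative_div_eval_of_ne_zero hP,
    ← (IsAlgClosed.splits Q).eval_derivative_div_eval_of_ne_zero hQ, deriv_eq, hPQ.self_of_nhds]
  push_cast
  field_simp
  ring

variable {ι K : Type*} [Fintype ι] [Field K]

/-- The common denominator of the partial fractions `p i / (X - a i) ^ 2`. -/
noncomputable def inverseSquareDenom (a : ι → K) : K[X] := ∏ i, (X - C (a i)) ^ 2

/-- The numerator of `∑ i, p i / (X - a i) ^ 2` over the denominator `inverseSquareDenom a`. -/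
noncomputable def inverseSquareNumer [DecidableEq ι] (a p : ι → K) : K[X] :=
  ∑ i, C (p i) * ∏ j ∈ Finset.univ.erase i, (X - C (a j)) ^ 2

/-- The numerator of `c + ∑ i, p i / (X - a i) ^ 2` over the denominator `inverseSquareDenom a`. -/
noncomputable def inverseSquareSumNumer [DecidableEq ι] (c : K) (a p : ι → K) : K[X] :=
  inverseSquareNumer a p + C c * inverseSquareDenom a

variable {a p : ι → K}

theorem eval_inverseSquareDenom_ne_zero {z : K} (hz : ∀ i, z ≠ a i) :
    (inverseSquareDenom a).eval z ≠ 0 := by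
  simp [inverseSquareDenom, eval_prod, Finset.prod_eq_zero_iff, sub_eq_zero, hz]

theorem roots_inverseSquareDenom (a : ι → K) :
    (inverseSquareDenom a).roots = 2 • Finset.univ.val.map a := by
  rw [inverseSquareDenom, Finset.prod_pow, roots_pow, roots_prod _ _ (Finset.prod_ne_zero_iff.mpr
    fun i _ => X_sub_C_ne_zero (a i))]
  simp [roots_X_sub_C]

variable [DecidableEq ι]

theorem eval_inverseSquareNumer {z : K} (hz : ∀ i, z ≠ a i) :
    (inverseSquareNumer a p).eval z
      = (inverseSquareDenom a).eval z * ∑ i, p i / (z - a i) ^ 2 := by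
  simp only [inverseSquareNumer, inverseSquareDenom, eval_finsetSum, eval_mul, eval_C, eval_prod,
    eval_pow, eval_sub, eval_X, Finset.mul_sum]
  refine Finset.sum_congr rfl fun i _ => ?_
  have := sub_ne_zero.mpr (hz i)
  rw [← Finset.mul_prod_erase _ _ (Finset.mem_univ i)]
  field_simp

theorem isCoprime_inverseSquareNumer_inverseSquareDenom (ha : Function.Injective a)
    (hp : ∀ i, p i ≠ 0) : IsCoprime (inverseSquareNumer a p) (inverseSquareDenom a) := by
  refine IsCoprime.prod_right fun i _ => IsCoprime.pow_right (IsCoprime.symm ?_)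
  rw [(irreducible_X_sub_C _).coprime_iff_not_dvd, dvd_iff_isRoot, IsRoot, inverseSquareNumer,
    eval_finsetSum, Finset.sum_eq_single_of_mem i (Finset.mem_univ i)]
  · simp only [eval_mul, eval_C, eval_prod, eval_pow, eval_sub, eval_X]
    refine mul_ne_zero (hp i) (Finset.prod_ne_zero_iff.mpr fun j hj => pow_ne_zero 2 ?_)
    exact sub_ne_zero.mpr (ha.ne (Finset.ne_of_mem_erase hj).symm)
  · intro j _ hji
    rw [eval_mul, eval_prod, Finset.prod_eq_zero (i := i) (by simp [hji.symm]) (by simp), mul_zero]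

theorem add_sum_div_sq_eq_zero_of_isRoot (ha : Function.Injective a) (hp : ∀ i, p i ≠ 0) {c z : K}
    (hz : (inverseSquareSumNumer c a p).IsRoot z) :
    c + ∑ i, p i / (z - a i) ^ 2 = 0 := by
  rw [IsRoot, inverseSquareSumNumer, eval_add, eval_mul, eval_C] at hz
  have hD : (inverseSquareDenom a).eval z ≠ 0 := fun h => by
    have hN : (inverseSquareNumer a p).eval z = 0 := by simpa [h] using hz
    have hcoprime := isCoprime_inverseSquareNumer_inverseSquareDenom ha hp
    exact (hcoprime.map (evalRingHom z)).ne_zero_or_ne_zero.elim (· hN) (· h)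
  have hpole : ∀ i, z ≠ a i := by
    rintro i rfl
    exact hD (by simp [inverseSquareDenom, eval_prod, Finset.prod_eq_zero (Finset.mem_univ i)])
  rw [eval_inverseSquareNumer hpole] at hz
  exact (mul_eq_zero.mp (by linear_combination hz)).resolve_left hD

end Polynomial

section DerivChain

variable {𝕜 E : Type*} [NontriviallyNormedField 𝕜] [NormedAddCommGroup E] [NormedSpace 𝕜 E]

/-- `F k` is the `k`-th derivative of `F 0` at the points of `s`. -/
def IsDerivChain (F : ℕ → 𝕜 → E) (s : Set 𝕜) : Prop :=
  ∀ k, ∀ x ∈ s, HasDerivAt (F k) (F (k + 1) x) x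

namespace IsDerivChain

variable {F : ℕ → 𝕜 → E} {s : Set 𝕜}

theorem const_add (hF : IsDerivChain F s) (c : E) :
    IsDerivChain (fun k x => (Pi.single 0 c : ℕ → E) k + F k x) s := fun k x hx => by
  simpa using (hF k x hx).const_add ((Pi.single 0 c : ℕ → E) k)

theorem iteratedDeriv_eq (hF : IsDerivChain F s) (hs : IsOpen s) (m k : ℕ) {x : 𝕜} (hx : x ∈ s) :
    iteratedDeriv k (F m) x = F (m + k) x := by
  induction k generalizing m with
  | zero => simp
  | succ k ih =>
    have deriv_eq : deriv (F m) =ᶠ[𝓝 x] F (m + 1) := by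
      filter_upwards [hs.mem_nhds hx] with y hy using (hF m y hy).deriv
    rw [iteratedDeriv_succ', deriv_eq.iteratedDeriv_eq, ih, add_right_comm, add_assoc]

theorem contDiffAt (hF : IsDerivChain F s) (hs : IsOpen s) (m : ℕ) {x : 𝕜} (hx : x ∈ s) :
    ContDiffAt 𝕜 (⊤ : ℕ∞) (F m) x := by
  refine ContDiffOn.contDiffAt (contDiffOn_of_differentiableOn_deriv fun k _ => ?_)
    (hs.mem_nhds hx)
  refine DifferentiableOn.congr (f := F (m + k))
    (fun y hy => (hF (m + k) y hy).differentiableAt.differentiableWithinAt) fun y hy => ?_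
  rw [iteratedDerivWithin_of_isOpen hs hy, hF.iteratedDeriv_eq hs m k hy]

end IsDerivChain

/-- The derivatives of `-f' / f` at a point as rational functions of the derivatives
`y k = f⁽ᵏ⁾`, obtained by solving the Leibniz formula for `f * (-f' / f) = -f'`. -/
noncomputable def negLogDerivJet {K : Type*} [Field K] (y : ℕ → K) (m : ℕ) : K :=
  (-y (m + 1) - ∑ k : Fin m, m.choose k * negLogDerivJet y k * y (m - k)) / y 0

theorem continuousAt_negLogDerivJet {y : ℕ → 𝕜} (hy : y 0 ≠ 0) (m : ℕ) :
    ContinuousAt (fun y : ℕ → 𝕜 => negLogDerivJet y m) y := by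
  induction m using Nat.strong_induction_on with
  | h m ih =>
    have apply_k : ∀ k : ℕ, ContinuousAt (fun y : ℕ → 𝕜 => y k) y := fun k =>
      continuousAt_apply k y
    simp_rw [negLogDerivJet.eq_1 _ m]
    refine ((apply_k _).neg.sub (tendsto_finsetSum _ fun k _ => ?_)).div (apply_k 0) hy
    exact (continuousAt_const.mul (ih k k.2)).mul (apply_k _)

/-- For the derivatives `y k = f⁽ᵏ⁾` of a function at a point: the derivatives of `-f' / f` at that
point have the signs required by complete monotonicity. -/
def IsLogAlternating (y : ℕ → ℝ) : Prop := ∀ m, 0 ≤ (-1) ^ m * negLogDerivJet y m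

theorem IsLogAlternating.of_mem_closure {s : Set (ℕ → ℝ)} (hs : ∀ y ∈ s, IsLogAlternating y)
    {y : ℕ → ℝ} (hy : y ∈ closure s) (hy0 : y 0 ≠ 0) : IsLogAlternating y := fun m => by
  have hcont : ContinuousAt (fun y : ℕ → ℝ => (-1) ^ m * negLogDerivJet y m) y :=
    continuousAt_const.mul (continuousAt_negLogDerivJet hy0 m)
  have hmem := hcont.continuousWithinAt.mem_closure hy (t := Ici 0) fun y hy => hs y hy m
  rwa [isClosed_Ici.closure_eq] at hmem

theorem IsDerivChain.contDiffAt_neg_div {F : ℕ → 𝕜 → 𝕜} {s : Set 𝕜} (hF : IsDerivChain F s)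
    (hs : IsOpen s) {x : 𝕜} (hx : x ∈ s) (hF0 : F 0 x ≠ 0) :
    ContDiffAt 𝕜 (⊤ : ℕ∞) (fun x => -F 1 x / F 0 x) x :=
  (hF.contDiffAt hs 1 hx).neg.div (hF.contDiffAt hs 0 hx) hF0

theorem IsDerivChain.iteratedDeriv_neg_div {F : ℕ → 𝕜 → 𝕜} {s : Set 𝕜} (hF : IsDerivChain F s)
    (hs : IsOpen s) (hF0 : ∀ x ∈ s, F 0 x ≠ 0) (m : ℕ) {x : 𝕜} (hx : x ∈ s) :
    iteratedDeriv m (fun x => -F 1 x / F 0 x) x = negLogDerivJet (F · x) m := by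
  induction m using Nat.strong_induction_on with
  | h m ih =>
    set G : 𝕜 → 𝕜 := fun x => -F 1 x / F 0 x with hG
    have mul_eq : G * F 0 =ᶠ[𝓝 x] -F 1 := by
      filter_upwards [hs.mem_nhds hx] with y hy using div_mul_cancel₀ _ (hF0 y hy)
    have leibniz := iteratedDeriv_mul (n := m)
      ((hF.contDiffAt_neg_div hs hx (hF0 x hx)).of_le (by exact_mod_cast le_top))
      ((hF.contDiffAt hs 0 hx).of_le (by exact_mod_cast le_top))
    rw [mul_eq.iteratedDeriv_eq, iteratedDeriv_neg, hF.iteratedDeriv_eq hs 1 m hx,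
      Finset.sum_range_succ, Finset.sum_range] at leibniz
    rw [negLogDerivJet, eq_div_iff (hF0 x hx), add_comm m 1, leibniz]
    simp [hF.iteratedDeriv_eq hs 0 _ hx, ← ih, ← hG]

end DerivChain

section InverseJet

variable {𝕜 : Type*} [NontriviallyNormedField 𝕜]

/-- The value and the successive derivatives of the function `s ↦ s⁻¹` at `s`. -/
def inverseJet (s : 𝕜) (k : ℕ) : 𝕜 := (-1) ^ k * k.factorial * (s ^ (k + 1))⁻¹

/-- The value and the successive derivatives of the function `s ↦ (s ^ 2)⁻¹` at `s`. -/
def inverseSquareJet (s : 𝕜) (k : ℕ) : 𝕜 := -inverseJet s (k + 1)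

theorem inverseJet_zero (s : 𝕜) : inverseJet s 0 = s⁻¹ := by simp [inverseJet]

theorem inverseSquareJet_zero (s : 𝕜) : inverseSquareJet s 0 = (s ^ 2)⁻¹ := by
  simp [inverseSquareJet, inverseJet]

theorem isDerivChain_inverseJet :
    IsDerivChain (fun k (s : 𝕜) => inverseJet s k) {0}ᶜ := fun k s hs => by
  have hs : s ≠ 0 := hs
  refine (((hasDerivAt_pow (k + 1) s).inv (pow_ne_zero _ hs)).const_mul
    ((-1) ^ k * k.factorial : 𝕜)).congr_deriv ?_
  simp only [inverseJet, Nat.factorial_succ]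
  push_cast
  field_simp
  ring

theorem isDerivChain_inverseSquareJet :
    IsDerivChain (fun k (s : 𝕜) => inverseSquareJet s k) {0}ᶜ := fun k s hs =>
  (isDerivChain_inverseJet (k + 1) s hs).neg

end InverseJet

section FiniteSums

variable {ι : Type*} [Fintype ι] {a p : ι → ℝ} {c x : ℝ}

/-- The value and the successive derivatives of `c + ∑ i, p i / (x - a i) ^ 2` at `x`. -/
noncomputable def inverseSquareSumJet (c : ℝ) (a p : ι → ℝ) (x : ℝ) : ℕ → ℝ :=
  Pi.single 0 c + ∑ i, p i • inverseSquareJet (x - a i)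

theorem inverseSquareSumJet_zero :
    inverseSquareSumJet c a p x 0 = c + ∑ i, p i / (x - a i) ^ 2 := by
  simp [inverseSquareSumJet, inverseSquareJet_zero, div_eq_mul_inv]

theorem inverseSquareSumJet_zero_pos (hc : 0 < c) (hp : ∀ i, 0 ≤ p i) :
    0 < inverseSquareSumJet c a p x 0 := by
  rw [inverseSquareSumJet_zero]
  exact add_pos_of_pos_of_nonneg hc
    (Finset.sum_nonneg fun i _ => div_nonneg (hp i) (sq_nonneg _))

theorem isDerivChain_inverseSquareSumJet (c : ℝ) (a p : ι → ℝ) :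
    IsDerivChain (fun k x => inverseSquareSumJet c a p x k) (range a)ᶜ := by
  have hsum : IsDerivChain (fun k x => ∑ i, p i * inverseSquareJet (x - a i) k) (range a)ᶜ :=
    fun k x hx => HasDerivAt.fun_sum fun i _ =>
      HasDerivAt.const_mul (p i) ((isDerivChain_inverseSquareJet k (x - a i) fun h =>
        hx ⟨i, (sub_eq_zero.mp h).symm⟩).comp_sub_const x (a i))
  simpa [inverseSquareSumJet] using hsum.const_add c

/-- The value and the successive derivatives at `x` of the logarithmic derivative of a rational
function with double zeros at the `a i` and simple poles at the points of `S`. Only real parts are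
kept, which loses nothing when `S` is closed under conjugation. -/
noncomputable def partialFractionJet (a : ι → ℝ) (S : Finset ℂ) (x : ℝ) (k : ℕ) : ℝ :=
  2 * ∑ i, inverseJet (x - a i) k - (∑ z ∈ S, inverseJet ((x : ℂ) - z) k).re

theorem isDerivChain_partialFractionJet (a : ι → ℝ) {S : Finset ℂ} (hS : ∀ z ∈ S, z.im ≠ 0) :
    IsDerivChain (fun k x => partialFractionJet a S x k) (range a)ᶜ := by
  intro k x hx
  have poles : HasDerivAt (fun x => ∑ i, inverseJet (x - a i) k)
      (∑ i, inverseJet (x - a i) (k + 1)) x := HasDerivAt.fun_sum fun i _ =>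
    (isDerivChain_inverseJet k (x - a i) fun h => hx ⟨i, (sub_eq_zero.mp h).symm⟩).comp_sub_const
      x (a i)
  have zeros : HasDerivAt (fun y : ℂ => ∑ z ∈ S, inverseJet (y - z) k)
      (∑ z ∈ S, inverseJet ((x : ℂ) - z) (k + 1)) x := HasDerivAt.fun_sum fun z hz =>
    (isDerivChain_inverseJet k ((x : ℂ) - z) fun h =>
      hS z hz (by simp [← sub_eq_zero.mp h])).comp_sub_const (x : ℂ) z
  exact (poles.const_mul 2).sub zeros.real_of_complex

theorem neg_one_pow_mul_partialFractionJet_nonneg {S : Finset ℂ} {k : ℕ}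
    (h : ∑ z ∈ S, (‖x - z‖ ^ (k + 1))⁻¹ ≤ 2 * ∑ i, ((x - a i) ^ (k + 1))⁻¹) :
    0 ≤ (-1) ^ k * partialFractionJet a S x k := by
  have re_le : (∑ z ∈ S, ((x - z : ℂ) ^ (k + 1))⁻¹).re ≤ ∑ z ∈ S, (‖x - z‖ ^ (k + 1))⁻¹ :=
    calc (∑ z ∈ S, ((x - z : ℂ) ^ (k + 1))⁻¹).re
        ≤ ‖∑ z ∈ S, ((x - z : ℂ) ^ (k + 1))⁻¹‖ := Complex.re_le_norm _
      _ ≤ ∑ z ∈ S, ‖((x - z : ℂ) ^ (k + 1))⁻¹‖ := norm_sum_le _ _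
      _ = ∑ z ∈ S, (‖x - z‖ ^ (k + 1))⁻¹ := by simp only [norm_inv, norm_pow]
  have jet_eq : partialFractionJet a S x k = (-1) ^ k * (k.factorial *
      (2 * ∑ i, ((x - a i) ^ (k + 1))⁻¹ - (∑ z ∈ S, ((x - z : ℂ) ^ (k + 1))⁻¹).re)) := by
    have coeff : ((-1) ^ k * k.factorial : ℂ) = ((-1) ^ k * k.factorial : ℝ) := by push_cast; rfl
    simp only [partialFractionJet, inverseJet, ← Finset.mul_sum, coeff, Complex.re_ofReal_mul]
    ring
  rw [jet_eq, ← mul_assoc, ← mul_pow, neg_one_mul, neg_neg, one_pow, one_mul]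
  exact mul_nonneg k.factorial.cast_nonneg (sub_nonneg.mpr (re_le.trans h))

open Polynomial in
theorem neg_div_inverseSquareSumJet_eq [DecidableEq ι] (hc : 0 < c) (hp : ∀ i, 0 ≤ p i)
    (hroots : (inverseSquareSumNumer (c : ℂ) (fun i => a i) (fun i => p i)).roots.Nodup)
    (hx : x ∈ (range a)ᶜ) :
    -inverseSquareSumJet c a p x 1 / inverseSquareSumJet c a p x 0
      = partialFractionJet a
        (inverseSquareSumNumer (c : ℂ) (fun i => a i) (fun i => p i)).roots.toFinset x 0 := by
  set D : ℂ[X] := inverseSquareDenom fun i => (a i : ℂ)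
  set N : ℂ[X] := inverseSquareSumNumer (c : ℂ) (fun i => a i) (fun i => p i) with hN
  have ne_pole : ∀ y ∈ (range a)ᶜ, ∀ i, (y : ℂ) ≠ a i := fun y hy i h =>
    hy ⟨i, (Complex.ofReal_injective h).symm⟩
  have factor : ∀ y ∈ (range a)ᶜ,
      N.eval (y : ℂ) = D.eval (y : ℂ) * (inverseSquareSumJet c a p y 0 : ℝ) := fun y hy => by
    rw [hN, inverseSquareSumNumer, eval_add, eval_inverseSquareNumer (ne_pole y hy), eval_mul,
      eval_C, inverseSquareSumJet_zero]
    push_cast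
    ring
  have key := neg_div_eq_sum_roots_sub_sum_roots (isDerivChain_inverseSquareSumJet c a p 0 x hx)
    (by filter_upwards [(finite_range a).isClosed.isOpen_compl.mem_nhds hx] using factor)
    (eval_inverseSquareDenom_ne_zero (ne_pole x hx)) (inverseSquareSumJet_zero_pos hc hp).ne'
  have sum_poles : (D.roots.map fun r => (x - r : ℂ)⁻¹).sum
      = ((2 * ∑ i, (x - a i)⁻¹ : ℝ) : ℂ) := by
    rw [roots_inverseSquareDenom]
    simp [Multiset.map_nsmul, Multiset.sum_nsmul]
  have sum_zeros : (N.roots.map fun r => (x - r : ℂ)⁻¹).sum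
      = ∑ z ∈ N.roots.toFinset, (x - z : ℂ)⁻¹ := by
    rw [Finset.sum, Multiset.toFinset_val, hroots.dedup]
  rw [sum_poles, sum_zeros] at key
  simpa only [partialFractionJet, inverseJet_zero, Complex.sub_re, Complex.ofReal_re]
    using congrArg Complex.re key

open Polynomial in
theorem isLogAlternating_inverseSquareSumJet_of_nodup_roots [DecidableEq ι] (hc : 0 < c)
    (hp : ∀ i, 0 < p i) (ha : Function.Injective a)
    (hroots : (inverseSquareSumNumer (c : ℂ) (fun i => a i) (fun i => p i)).roots.Nodup)
    (hx : ∀ i, a i < x) : IsLogAlternating (inverseSquareSumJet c a p x) := fun m => by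
  have hp' : ∀ i, 0 ≤ p i := fun i => (hp i).le
  set N : ℂ[X] := inverseSquareSumNumer (c : ℂ) (fun i => a i) (fun i => p i)
  have zero_of_mem : ∀ z ∈ N.roots.toFinset, (c : ℂ) + ∑ i, p i / (z - a i) ^ 2 = 0 :=
    fun z hz => add_sum_div_sq_eq_zero_of_isRoot (Complex.ofReal_injective.comp ha)
      (fun i => Complex.ofReal_ne_zero.mpr (hp i).ne')
      (isRoot_of_mem_roots (Multiset.mem_toFinset.mp hz))
  have hopen : IsOpen (range a)ᶜ := (finite_range a).isClosed.isOpen_compl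
  have hxa : x ∈ (range a)ᶜ := by rintro ⟨i, rfl⟩; exact (hx i).false
  have ratio_eq : (fun y => -inverseSquareSumJet c a p y 1 / inverseSquareSumJet c a p y 0)
      =ᶠ[𝓝 x] fun y => partialFractionJet a N.roots.toFinset y 0 := by
    filter_upwards [hopen.mem_nhds hxa] with y hy
    exact neg_div_inverseSquareSumJet_eq hc hp' hroots hy
  rw [← (isDerivChain_inverseSquareSumJet c a p).iteratedDeriv_neg_div hopen
      (fun _ _ => (inverseSquareSumJet_zero_pos hc hp').ne') m hxa, ratio_eq.iteratedDeriv_eq,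
    (isDerivChain_partialFractionJet a fun z hz => im_ne_zero_of_add_sum_div_sq_eq_zero hp' hc
      (zero_of_mem z hz)).iteratedDeriv_eq hopen 0 m hxa, zero_add]
  exact neg_one_pow_mul_partialFractionJet_nonneg
    (sum_inv_norm_sub_pow_le_two_mul hp hc zero_of_mem hx (m + 1))

theorem isLogAlternating_inverseSquareSumJet (hc : 0 < c)
    (hp : ∀ i, 0 < p i) (ha : Function.Injective a) (hx : ∀ i, a i < x) :
    IsLogAlternating (inverseSquareSumJet c a p x) := by
  classical
  set B : Set ℝ :=
    {c | ¬(inverseSquareSumNumer (c : ℂ) (fun i => a i) (fun i => p i)).roots.Nodup}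
  have hB : B.Finite := (finite_setOf_not_nodup_roots_add_C_mul
    (isCoprime_inverseSquareNumer_inverseSquareDenom (Complex.ofReal_injective.comp ha)
      fun i => Complex.ofReal_ne_zero.mpr (hp i).ne')).preimage Complex.ofReal_injective.injOn
  have hc_mem : c ∈ closure (Ioi 0 ∩ Bᶜ) :=
    (hB.countable.dense_compl ℝ).open_subset_closure_inter isOpen_Ioi hc
  have hcont : Continuous fun c => inverseSquareSumJet c a p x :=
    (continuous_single (A := fun _ : ℕ => ℝ) 0).add continuous_const
  refine IsLogAlternating.of_mem_closure ?_
    (mem_closure_image (f := fun c => inverseSquareSumJet c a p x) hcont.continuousAt hc_mem)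
    (inverseSquareSumJet_zero_pos hc fun i => (hp i).le).ne'
  rintro _ ⟨c', ⟨hc', hroots⟩, rfl⟩
  exact isLogAlternating_inverseSquareSumJet_of_nodup_roots hc' hp ha (not_not.mp hroots) hx

theorem exists_single_add_eq_inverseSquareSumJet {s : Set ℝ} {y : ℕ → ℝ}
    (hy : y ∈ PointedCone.hull ℝ ((fun t => inverseSquareJet (x + t)) '' s)) (c : ℝ) :
    ∃ (T : Finset ℝ) (p : T → ℝ), ↑T ⊆ s ∧ (∀ t, 0 < p t) ∧
      Pi.single 0 c + y = inverseSquareSumJet c (fun t : T => -t) p x := by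
  obtain ⟨q, hq, rfl⟩ := (Finsupp.mem_span_image_iff_linearCombination _).mp hy
  refine ⟨q.support, fun t => q t, hq, fun t => ?_, ?_⟩
  · exact (q t).2.lt_of_ne' fun h => Finsupp.mem_support_iff.mp t.2 (Subtype.ext h)
  · simp only [inverseSquareSumJet, sub_neg_eq_add, Finsupp.linearCombination_apply, Finsupp.sum]
    rw [Finset.sum_coe_sort q.support fun t => (q t : ℝ) • inverseSquareJet (x + t)]
    rfl

theorem isLogAlternating_single_add_of_mem_closure_hull {y : ℕ → ℝ} (hc : 0 ≤ c)
    (hx : 0 < x)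
    (hy : y ∈ closure (PointedCone.hull ℝ ((fun t => inverseSquareJet (x + t)) '' Ici 0) : Set _))
    (hy0 : (Pi.single 0 c + y : ℕ → ℝ) 0 ≠ 0) :
    IsLogAlternating (Pi.single 0 c + y) := by
  have hc_mem : c ∈ closure (Ioi 0) := by rwa [closure_Ioi]
  have single_mem : (Pi.single 0 c : ℕ → ℝ) ∈ closure (Pi.single 0 '' Ioi 0) :=
    mem_closure_image (continuous_single 0).continuousAt hc_mem
  have hmem := map_mem_closure₂ continuous_add single_mem hy fun _ h _ => mem_image2_of_mem h
  refine IsLogAlternating.of_mem_closure ?_ hmem hy0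
  rintro _ ⟨_, ⟨c', hc', rfl⟩, z, hz, rfl⟩
  obtain ⟨T, p, hT, hp, hsum⟩ := exists_single_add_eq_inverseSquareSumJet hz c'
  rw [hsum]
  refine isLogAlternating_inverseSquareSumJet hc' hp
    (neg_injective.comp Subtype.val_injective) fun t => ?_
  exact (neg_nonpos.mpr (hT t.2)).trans_lt hx

end FiniteSums

section IntegralCone

theorem exists_finsupp_forall_apply_eq_sum {𝕜 ι : Type*} [NontriviallyNormedField 𝕜]
    (f : (ι → 𝕜) →L[𝕜] 𝕜) : ∃ r : ι →₀ 𝕜, ∀ y, f y = r.sum fun k b => b * y k := by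
  have f_mem_span : (f : (ι → 𝕜) →ₗ[𝕜] 𝕜) ∈
      Submodule.span 𝕜 (range fun k => (LinearMap.proj k : (ι → 𝕜) →ₗ[𝕜] 𝕜)) :=
    (LinearMap.mem_span_iff_continuous _).mpr f.continuous
  obtain ⟨r, hr⟩ := Finsupp.mem_span_range_iff_exists_finsupp.mp f_mem_span
  refine ⟨r, fun y => ?_⟩
  simpa [Finsupp.sum] using (LinearMap.congr_fun hr y).symm

variable {ι α : Type*} [MeasurableSpace α] {μ : Measure α} {g : α → ι → ℝ}

theorem integral_clm_apply_pi (hg : ∀ k, Integrable (fun t => g t k) μ)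
    (f : (ι → ℝ) →L[ℝ] ℝ) : ∫ t, f (g t) ∂μ = f fun k => ∫ t, g t k ∂μ := by
  obtain ⟨r, hr⟩ := exists_finsupp_forall_apply_eq_sum f
  simp only [hr, Finsupp.sum]
  rw [integral_finsetSum _ fun k _ => (hg k).const_mul (r k)]
  simp only [integral_const_mul]

theorem integral_pi_mem_properCone (K : ProperCone ℝ (ι → ℝ))
    (hg : ∀ k, Integrable (fun t => g t k) μ) (hgK : ∀ᵐ t ∂μ, g t ∈ K) :
    (fun k => ∫ t, g t k ∂μ) ∈ K := by
  by_contra hmem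
  obtain ⟨f, hfK, hf⟩ := K.hyperplane_separation_point hmem
  rw [← integral_clm_apply_pi hg f] at hf
  exact hf.not_ge (integral_nonneg_of_ae (hgK.mono fun t ht => hfK _ ht))

end IntegralCone

section StieltjesIntegral

theorem measurable_inverseSquareJet (k : ℕ) :
    Measurable fun s : ℝ => inverseSquareJet s k := by
  simp only [inverseSquareJet, inverseJet]
  fun_prop

theorem abs_inverseSquareJet {s : ℝ} (hs : 0 ≤ s) (k : ℕ) :
    |inverseSquareJet s k| = (k + 1).factorial * (s ^ (k + 2))⁻¹ := by
  simp [inverseSquareJet, inverseJet, abs_mul, abs_of_nonneg hs]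

theorem abs_inverseSquareJet_le_abs_of_le {r s : ℝ} (hr : 0 < r) (hrs : r ≤ s) (k : ℕ) :
    |inverseSquareJet s k| ≤ |inverseSquareJet r k| := by
  rw [abs_inverseSquareJet hr.le, abs_inverseSquareJet (hr.le.trans hrs)]
  gcongr

variable {μ : Measure ℝ} {c x : ℝ}

/-- The value and the successive derivatives of `c + ∫ t, ((x + t) ^ 2)⁻¹ ∂μ` at `x`. -/
noncomputable def stieltjesJet (μ : Measure ℝ) (c x : ℝ) : ℕ → ℝ :=
  Pi.single 0 c + fun k => ∫ t, inverseSquareJet (x + t) k ∂μ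

theorem stieltjesJet_zero (μ : Measure ℝ) (c x : ℝ) :
    stieltjesJet μ c x 0 = (∫ t, ((x + t) ^ 2)⁻¹ ∂μ) + c := by
  simp [stieltjesJet, inverseSquareJet_zero, add_comm]

theorem integrable_inverseSquareJet (hμ : ∀ᵐ t ∂μ, 0 ≤ t) (hx : 0 < x)
    (hint : Integrable (fun t => ((x + t) ^ 2)⁻¹) μ) (k : ℕ) :
    Integrable (fun t => inverseSquareJet (x + t) k) μ := by
  refine (hint.const_mul ((k + 1).factorial * (x ^ k)⁻¹)).mono'
    ((measurable_inverseSquareJet k).comp (measurable_const_add x)).aestronglyMeasurable ?_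
  filter_upwards [hμ] with t ht
  have hxt : x ≤ x + t := le_add_of_nonneg_right ht
  rw [Real.norm_eq_abs, abs_inverseSquareJet (hx.le.trans hxt), mul_assoc, ← mul_inv, pow_add]
  gcongr

theorem isDerivChain_stieltjesJet (hμ : ∀ᵐ t ∂μ, 0 ≤ t)
    (hint : ∀ x : ℝ, 0 < x → Integrable (fun t => ((x + t) ^ 2)⁻¹) μ) (c : ℝ) :
    IsDerivChain (fun k x => stieltjesJet μ c x k) (Ioi 0) := by
  suffices h : IsDerivChain (fun k x => ∫ t, inverseSquareJet (x + t) k ∂μ) (Ioi 0) from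
    h.const_add c
  intro k x hx
  have hx : 0 < x := hx
  refine (hasDerivAt_integral_of_dominated_loc_of_deriv_le
    (F' := fun x t => inverseSquareJet (x + t) (k + 1))
    (bound := fun t => |inverseSquareJet (x / 2 + t) (k + 1)|) (Ioi_mem_nhds (half_lt_self hx))
    (.of_forall fun y =>
      ((measurable_inverseSquareJet k).comp (measurable_const_add y)).aestronglyMeasurable)
    (integrable_inverseSquareJet hμ hx (hint x hx) k)
    ((measurable_inverseSquareJet (k + 1)).comp (measurable_const_add x)).aestronglyMeasurable ?_
    (integrable_inverseSquareJet hμ (half_pos hx) (hint _ (half_pos hx)) (k + 1)).abs ?_).2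
  · filter_upwards [hμ] with t ht y hy
    have hy : x / 2 < y := hy
    exact abs_inverseSquareJet_le_abs_of_le (by linarith) (by linarith) (k + 1)
  · filter_upwards [hμ] with t ht y hy
    have hy : x / 2 < y := hy
    have hyt : y + t ≠ 0 := by linarith
    exact (isDerivChain_inverseSquareJet k (y + t) hyt).comp_add_const y t

theorem integral_inv_add_sq_pos (hμ : ∀ᵐ t ∂μ, 0 ≤ t) (hμ0 : μ ≠ 0) (hx : 0 < x)
    (hint : Integrable (fun t => ((x + t) ^ 2)⁻¹) μ) : 0 < ∫ t, ((x + t) ^ 2)⁻¹ ∂μ := by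
  have hnonneg : 0 ≤ fun t => ((x + t) ^ 2)⁻¹ := fun t => by positivity
  refine (integral_nonneg hnonneg).lt_of_ne' fun h => ?_
  rw [integral_eq_zero_iff_of_nonneg hnonneg hint] at h
  refine hμ0 (ae_eq_bot.mp (eventually_false_iff_eq_bot.mp ?_))
  filter_upwards [h, hμ] with t hzero ht
  have hxt : 0 < x + t := by linarith
  exact (inv_pos.mpr (pow_pos hxt 2)).ne' hzero

theorem stieltjesJet_zero_pos (hμ : ∀ᵐ t ∂μ, 0 ≤ t) (hc : 0 ≤ c) (hne : c ≠ 0 ∨ μ ≠ 0)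
    (hx : 0 < x) (hint : Integrable (fun t => ((x + t) ^ 2)⁻¹) μ) :
    0 < stieltjesJet μ c x 0 := by
  rw [stieltjesJet_zero]
  rcases hne with hc0 | hμ0
  · exact add_pos_of_nonneg_of_pos (integral_nonneg fun t => by positivity) (hc.lt_of_ne' hc0)
  · exact add_pos_of_pos_of_nonneg (integral_inv_add_sq_pos hμ hμ0 hx hint) hc

theorem isLogAlternating_stieltjesJet (hμ : ∀ᵐ t ∂μ, 0 ≤ t) (hc : 0 ≤ c)
    (hx : 0 < x) (hint : Integrable (fun t => ((x + t) ^ 2)⁻¹) μ)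
    (h0 : stieltjesJet μ c x 0 ≠ 0) :
    IsLogAlternating (stieltjesJet μ c x) := by
  set cone := PointedCone.hull ℝ ((fun t => inverseSquareJet (x + t)) '' Ici 0)
  have integral_mem := integral_pi_mem_properCone ⟨cone.closure, isClosed_closure⟩
    (integrable_inverseSquareJet hμ hx hint)
    (hμ.mono fun t ht => subset_closure (PointedCone.subset_hull (mem_image_of_mem _ ht)))
  exact isLogAlternating_single_add_of_mem_closure_hull hc hx integral_mem h0

end StieltjesIntegral

/-- Theorem (Steutel–Kristiansen): every generalized Stieltjes function of order 2
(not identically zero) is logarithmically completely monotonic. -/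
theorem stmt1 (f : ℝ → ℝ) (μ : Measure ℝ) (c : ℝ) (hc : 0 ≤ c)
    (hμ : μ (Set.Iio 0) = 0)
    (hint : ∀ x : ℝ, 0 < x → Integrable (fun t => ((x + t) ^ 2)⁻¹) μ)
    (hf : ∀ x : ℝ, 0 < x → f x = (∫ t, ((x + t) ^ 2)⁻¹ ∂μ) + c)
    (hne : ∃ x : ℝ, 0 < x ∧ f x ≠ 0) :
    CompletelyMonotonic (fun x => -deriv f x / f x) := by
  have ae_nonneg : ∀ᵐ t ∂μ, 0 ≤ t := by simpa [ae_iff, ← Iio_def] using hμ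
  have nontrivial : c ≠ 0 ∨ μ ≠ 0 := by
    obtain ⟨x, hx, hfx⟩ := hne
    contrapose! hfx
    simp [hf x hx, hfx]
  have chain := isDerivChain_stieltjesJet ae_nonneg hint c
  have jet_zero_ne_zero : ∀ x > 0, stieltjesJet μ c x 0 ≠ 0 := fun x hx =>
    (stieltjesJet_zero_pos ae_nonneg hc nontrivial hx (hint x hx)).ne'
  have f_eq : EqOn f (stieltjesJet μ c · 0) (Ioi 0) := fun x hx =>
    (hf x hx).trans (stieltjesJet_zero μ c x).symm
  have ratio_eq : ∀ x > 0, (fun x => -deriv f x / f x)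
      =ᶠ[𝓝 x] fun x => -stieltjesJet μ c x 1 / stieltjesJet μ c x 0 := fun x hx => by
    filter_upwards [Ioi_mem_nhds hx] with y hy
    rw [(f_eq.eventuallyEq_of_mem (Ioi_mem_nhds hy)).deriv_eq, (chain 0 y hy).deriv, f_eq hy]
  refine ⟨fun x hx => ?_, fun n x hx => ?_⟩
  · exact (chain.contDiffAt_neg_div isOpen_Ioi hx (jet_zero_ne_zero x hx)).congr_of_eventuallyEq
      (ratio_eq x hx)
  · rw [(ratio_eq x hx).iteratedDeriv_eq,
      chain.iteratedDeriv_neg_div isOpen_Ioi jet_zero_ne_zero n hx]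
    exact isLogAlternating_stieltjesJet ae_nonneg hc hx (hint x hx)
      (jet_zero_ne_zero x hx) n
end

section
/- Nielsen's beta function β is logarithmically completely monotonic on (0,∞), and for every c > 0 there exists a positive measure m_c on [0,∞) such that β(x)^c = ∫_0^∞ e^{-xt} dm_c(t) for all x > 0; these measures satisfy m_c * m_d = m_{c+d} (convolution) for all c, d > 0, and m_1 has density 1/(1+e^{-t}) with respect to Lebesgue measure on [0,∞). -/
open MeasureTheory Filter Set

/-!
Write `σ(t) = 1 / (1 + e^{-t})`, so that `β` is the Laplace transform of `σ`. Two integrations by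
parts give `2 x (x + 1) β(x) = x + 3/2 + R(x)`, where `R` is the Laplace transform of
`4 σ (1 - σ)²`. Since `σ (1 - σ) ≤ 1/4`, this density lies between `0` and `e^{-t/2} / 2`, whence
both `Q = R / (x + 3/2)` and `E - Q` are Laplace transforms of positive measures, where
`E = 1 / (2 x + 1)`. As `x (x + 1) = (x + 1/2)² (1 - E²)`,
`2 (x + 1/2) β(x) = (1 - 1 / (x + 3/2))⁻¹ (1 - Q)⁻¹ (1 - Q²) / (1 - E²)`,
and the logarithm `G` of the right-hand side is the Laplace transform of a positive measure, by the
series of `-log (1 - u)` and the positivity of `E² - Q²`. Hence `β = e^G / (2 x + 1)`: its powers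
are Laplace transforms of positive measures, and `-d(log β)/dx = 1 / (x + 1/2) - dG/dx` is
completely monotonic. The semigroup law and the value of `m₁` follow from the uniqueness of the
representing measure, which the substitution `u = e^{-t}` reduces to the Hausdorff moment problem.
-/

open Real ProbabilityTheory
open scoped ENNReal Topology unitInterval

namespace CompletelyMonotonic

variable {f g : ℝ → ℝ}

lemma congr (hf : CompletelyMonotonic f) (hfg : EqOn f g (Ioi 0)) : CompletelyMonotonic g := by
  have hev : ∀ x, 0 < x → g =ᶠ[𝓝 x] f := fun x hx =>
    (hfg.eventuallyEq_of_mem (Ioi_mem_nhds hx)).symm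
  refine ⟨fun x hx => (hf.1 x hx).congr_of_eventuallyEq (hev x hx), fun n x hx => ?_⟩
  rw [(hev x hx).iteratedDeriv_eq n]
  exact hf.2 n x hx

lemma add (hf : CompletelyMonotonic f) (hg : CompletelyMonotonic g) :
    CompletelyMonotonic (fun x => f x + g x) := by
  refine ⟨fun x hx => (hf.1 x hx).add (hg.1 x hx), fun n x hx => ?_⟩
  have hn : (n : WithTop ℕ∞) ≤ (⊤ : ℕ∞) := mod_cast le_top
  rw [iteratedDeriv_fun_add ((hf.1 x hx).of_le hn) ((hg.1 x hx).of_le hn), mul_add]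
  exact add_nonneg (hf.2 n x hx) (hg.2 n x hx)

lemma neg_deriv (hf : CompletelyMonotonic f) : CompletelyMonotonic (fun x => -deriv f x) := by
  refine ⟨fun x hx => ((hf.1 x hx).derivWithin (by simp)).neg, fun n x hx => ?_⟩
  have h := hf.2 (n + 1) x hx
  rw [iteratedDeriv_succ', pow_succ] at h
  rw [iteratedDeriv_fun_neg]
  linarith

end CompletelyMonotonic

namespace LogCompletelyMonotonic

variable {f g : ℝ → ℝ}

lemma congr (hf : LogCompletelyMonotonic f) (hfg : EqOn f g (Ioi 0)) :
    LogCompletelyMonotonic g := by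
  have hev : ∀ x, 0 < x → g =ᶠ[𝓝 x] f := fun x hx =>
    (hfg.eventuallyEq_of_mem (Ioi_mem_nhds hx)).symm
  refine ⟨fun x hx => hfg hx ▸ hf.1 x hx,
    fun x hx => (hf.2.1 x hx).congr_of_eventuallyEq (hev x hx), hf.2.2.congr fun x hx => ?_⟩
  simp only [(hev x hx).deriv_eq, hfg hx]

lemma mul (hf : LogCompletelyMonotonic f) (hg : LogCompletelyMonotonic g) :
    LogCompletelyMonotonic (fun x => f x * g x) := by
  refine ⟨fun x hx => mul_pos (hf.1 x hx) (hg.1 x hx),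
    fun x hx => (hf.2.1 x hx).mul (hg.2.1 x hx), (hf.2.2.add hg.2.2).congr fun x hx => ?_⟩
  have hf₀ := (hf.1 x hx).ne'
  have hg₀ := (hg.1 x hx).ne'
  have hderiv := deriv_fun_mul ((hf.2.1 x hx).differentiableAt (by simp))
    ((hg.2.1 x hx).differentiableAt (by simp))
  simp only [hderiv]
  field_simp
  ring

lemma const_mul (hf : LogCompletelyMonotonic f) {a : ℝ} (ha : 0 < a) :
    LogCompletelyMonotonic (fun x => a * f x) := by
  refine ⟨fun x hx => mul_pos ha (hf.1 x hx), fun x hx => contDiffAt_const.mul (hf.2.1 x hx),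
    hf.2.2.congr fun x _ => ?_⟩
  simp only [deriv_const_mul_field, ← mul_neg, mul_div_mul_left _ _ ha.ne']

end LogCompletelyMonotonic

lemma CompletelyMonotonic.logCompletelyMonotonic_exp {f : ℝ → ℝ} (hf : CompletelyMonotonic f) :
    LogCompletelyMonotonic (fun x => exp (f x)) := by
  refine ⟨fun x _ => exp_pos _, fun x hx => (hf.1 x hx).exp, hf.neg_deriv.congr fun x hx => ?_⟩
  have hderiv := ((hf.1 x hx).differentiableAt (by simp)).hasDerivAt.exp.deriv
  simp only [hderiv]
  field_simp

/-- `m` is a positive measure on `[0,∞)` whose Laplace transform is finite on `(0,∞)` and equals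
`f` there. The transform is a Lebesgue integral in `[0,∞]`, so that no integrability condition is
needed. -/
structure IsLaplaceTransformOf (f : ℝ → ℝ) (m : Measure ℝ) : Prop where
  measure_Iio : m (Iio 0) = 0
  nonneg : ∀ x, 0 < x → 0 ≤ f x
  lintegral_eq : ∀ x, 0 < x → ∫⁻ t, .ofReal (exp (-x * t)) ∂m = .ofReal (f x)

namespace IsLaplaceTransformOf

variable {f g : ℝ → ℝ} {m n : Measure ℝ} {x : ℝ}

lemma congr (hf : IsLaplaceTransformOf f m) (hfg : EqOn f g (Ioi 0)) :
    IsLaplaceTransformOf g m where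
  measure_Iio := hf.measure_Iio
  nonneg x hx := hfg hx ▸ hf.nonneg x hx
  lintegral_eq x hx := hfg hx ▸ hf.lintegral_eq x hx

lemma integrable_exp (hf : IsLaplaceTransformOf f m) (hx : 0 < x) :
    Integrable (fun t => exp (-x * t)) m := by
  refine ⟨by fun_prop, ?_⟩
  rw [hasFiniteIntegral_iff_ofReal (ae_of_all _ fun t => (exp_pos _).le), hf.lintegral_eq x hx]
  exact ENNReal.ofReal_lt_top

lemma integral_exp (hf : IsLaplaceTransformOf f m) (hx : 0 < x) :
    ∫ t, exp (-x * t) ∂m = f x := by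
  rw [integral_eq_lintegral_of_nonneg_ae (ae_of_all _ fun t => (exp_pos _).le) (by fun_prop),
    hf.lintegral_eq x hx, ENNReal.toReal_ofReal (hf.nonneg x hx)]

lemma ae_nonneg (hf : IsLaplaceTransformOf f m) : ∀ᵐ t ∂m, 0 ≤ t := by
  simp only [ae_iff, not_le]
  exact hf.measure_Iio

lemma mem_interior_integrableExpSet (hf : IsLaplaceTransformOf f m) (hx : 0 < x) :
    x ∈ interior (integrableExpSet (fun t => -t) m) :=
  mem_interior.2 ⟨Ioi 0, fun y hy => by
    simpa [integrableExpSet] using hf.integrable_exp hy, isOpen_Ioi, hx⟩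

lemma eqOn_mgf (hf : IsLaplaceTransformOf f m) : EqOn (mgf (fun t => -t) m) f (Ioi 0) :=
  fun x hx => by simpa [mgf] using hf.integral_exp hx

lemma completelyMonotonic (hf : IsLaplaceTransformOf f m) : CompletelyMonotonic f := by
  suffices h : CompletelyMonotonic (mgf (fun t => -t) m) from h.congr hf.eqOn_mgf
  refine ⟨fun x hx => (analyticAt_mgf (hf.mem_interior_integrableExpSet hx)).contDiffAt,
    fun n x hx => ?_⟩
  rw [iteratedDeriv_mgf (hf.mem_interior_integrableExpSet hx), ← integral_const_mul]
  refine integral_nonneg_of_ae ?_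
  filter_upwards [hf.ae_nonneg] with t ht
  rw [← mul_assoc, ← mul_pow, neg_one_mul, neg_neg]
  exact mul_nonneg (pow_nonneg ht n) (exp_pos _).le

lemma isFiniteMeasure_withDensity_exp_neg (hf : IsLaplaceTransformOf f m) :
    IsFiniteMeasure (m.withDensity fun t => .ofReal (exp (-t))) :=
  isFiniteMeasure_withDensity_ofReal (by simpa using (hf.integrable_exp one_pos).2)

end IsLaplaceTransformOf

lemma withDensity_exp_neg_withDensity_inv (m : Measure ℝ) :
    (m.withDensity fun t => .ofReal (exp (-t))).withDensity
      (fun t => (ENNReal.ofReal (exp (-t)))⁻¹) = m :=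
  withDensity_inv_same (by fun_prop) (ae_of_all _ fun t => by simp [exp_pos])
    (ae_of_all _ fun t => ENNReal.ofReal_ne_top)

namespace IsLaplaceTransformOf

variable {f g : ℝ → ℝ} {m n : Measure ℝ}

lemma sFinite (hf : IsLaplaceTransformOf f m) : SFinite m := by
  have := hf.isFiniteMeasure_withDensity_exp_neg
  rw [← withDensity_exp_neg_withDensity_inv m]
  infer_instance

lemma dirac_zero : IsLaplaceTransformOf (fun _ => 1) (Measure.dirac 0) where
  measure_Iio := by simp
  nonneg _ _ := zero_le_one
  lintegral_eq x _ := by simp [lintegral_dirac]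

lemma add (hf : IsLaplaceTransformOf f m) (hg : IsLaplaceTransformOf g n) :
    IsLaplaceTransformOf (fun x => f x + g x) (m + n) where
  measure_Iio := by simp [hf.measure_Iio, hg.measure_Iio]
  nonneg x hx := add_nonneg (hf.nonneg x hx) (hg.nonneg x hx)
  lintegral_eq x hx := by
    rw [lintegral_add_measure, hf.lintegral_eq x hx, hg.lintegral_eq x hx,
      ENNReal.ofReal_add (hf.nonneg x hx) (hg.nonneg x hx)]

lemma const_mul (hf : IsLaplaceTransformOf f m) {a : ℝ} (ha : 0 ≤ a) :
    IsLaplaceTransformOf (fun x => a * f x) (ENNReal.ofReal a • m) where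
  measure_Iio := by simp [hf.measure_Iio]
  nonneg x hx := mul_nonneg ha (hf.nonneg x hx)
  lintegral_eq x hx := by
    rw [lintegral_smul_measure, hf.lintegral_eq x hx, ENNReal.ofReal_mul ha, smul_eq_mul]

lemma conv (hf : IsLaplaceTransformOf f m) (hg : IsLaplaceTransformOf g n) :
    IsLaplaceTransformOf (fun x => f x * g x) (m.conv n) := by
  have := hf.sFinite
  have := hg.sFinite
  refine ⟨?_, fun x hx => mul_nonneg (hf.nonneg x hx) (hg.nonneg x hx), fun x hx => ?_⟩
  · have hsub : (fun p : ℝ × ℝ => p.1 + p.2) ⁻¹' Iio 0 ⊆ Iio 0 ×ˢ univ ∪ univ ×ˢ Iio 0 := by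
      rintro ⟨s, t⟩ hst
      simpa using lt_or_lt_of_add_lt_add (by simpa using hst : s + t < 0 + 0)
    rw [Measure.conv, Measure.map_apply (by fun_prop) measurableSet_Iio]
    refine measure_mono_null hsub (measure_union_null ?_ ?_)
    · rw [Measure.prod_prod, hf.measure_Iio, zero_mul]
    · rw [Measure.prod_prod, hg.measure_Iio, mul_zero]
  · rw [Measure.lintegral_conv (by fun_prop), ENNReal.ofReal_mul (hf.nonneg x hx),
      ← hf.lintegral_eq x hx, ← hg.lintegral_eq x hx, ← lintegral_mul_const _ (by fun_prop)]
    refine lintegral_congr fun s => ?_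
    rw [← lintegral_const_mul _ (by fun_prop)]
    refine lintegral_congr fun t => ?_
    rw [← ENNReal.ofReal_mul (exp_pos _).le, ← exp_add, mul_add]

lemma sum {F : ℕ → ℝ → ℝ} {μ : ℕ → Measure ℝ} (hF : ∀ k, IsLaplaceTransformOf (F k) (μ k))
    (hsum : ∀ x, 0 < x → HasSum (fun k => F k x) (f x)) :
    IsLaplaceTransformOf f (Measure.sum μ) where
  measure_Iio := by
    rw [Measure.sum_apply _ measurableSet_Iio]
    simp [fun k => (hF k).measure_Iio]
  nonneg x hx := (hsum x hx).nonneg fun k => (hF k).nonneg x hx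
  lintegral_eq x hx := by
    rw [lintegral_sum_measure, ← (hsum x hx).tsum_eq,
      ENNReal.ofReal_tsum_of_nonneg (fun k => (hF k).nonneg x hx) (hsum x hx).summable]
    exact tsum_congr fun k => (hF k).lintegral_eq x hx

end IsLaplaceTransformOf

lemma isLaplaceTransformOf_withDensity {g : ℝ → ℝ} (hg : Measurable g)
    (hg₀ : ∀ t, 0 < t → 0 ≤ g t)
    (hint : ∀ x, 0 < x → IntegrableOn (fun t => exp (-x * t) * g t) (Ioi 0)) :
    IsLaplaceTransformOf (LaplaceTransform g)
      ((volume.restrict (Ici 0)).withDensity fun t => .ofReal (g t)) := by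
  have hnonneg : ∀ x, 0 ≤ᵐ[volume.restrict (Ioi 0)] fun t => exp (-x * t) * g t := fun x => by
    filter_upwards [ae_restrict_mem measurableSet_Ioi] with t ht
    exact mul_nonneg (exp_pos _).le (hg₀ t ht)
  refine ⟨withDensity_absolutelyContinuous _ _ ?_, fun x _ => integral_nonneg_of_ae (hnonneg x),
    fun x hx => ?_⟩
  · rw [Measure.restrict_apply measurableSet_Iio, Iio_inter_Ici, Ico_self, measure_empty]
  · rw [LaplaceTransform, ofReal_integral_eq_lintegral_ofReal (hint x hx) (hnonneg x),
      lintegral_withDensity_eq_lintegral_mul _ (by fun_prop) (by fun_prop),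
      ← Measure.restrict_congr_set Ioi_ae_eq_Ici]
    refine lintegral_congr fun t => ?_
    rw [Pi.mul_apply, mul_comm, ENNReal.ofReal_mul (exp_pos _).le]

lemma eq_of_integral_pow_eq {s : Set ℝ} [CompactSpace s] {μ ν : Measure s} [IsFiniteMeasure μ]
    [IsFiniteMeasure ν] (h : ∀ k : ℕ, ∫ u, (u : ℝ) ^ k ∂μ = ∫ u, (u : ℝ) ^ k ∂ν) : μ = ν := by
  have hcont : ∀ (κ : Measure s) [IsFiniteMeasure κ],
      Continuous fun F : C(s, ℝ) => ∫ u, F u ∂κ := fun κ _ => by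
    refine (continuous_integral.comp (ContinuousMap.toLp 1 κ ℝ).continuous).congr fun F => ?_
    exact integral_congr_ae (ContinuousMap.coeFn_toLp κ F)
  have hpow : ∀ (κ : Measure s) [IsFiniteMeasure κ] (p : Polynomial ℝ),
      ∫ u, p.eval (u : ℝ) ∂κ = ∑ k ∈ Finset.range (p.natDegree + 1),
        p.coeff k * ∫ u, (u : ℝ) ^ k ∂κ := fun κ _ p => by
    simp only [Polynomial.eval_eq_sum_range, ← integral_const_mul]
    exact integral_finsetSum _ fun k _ =>
      Continuous.integrable_of_hasCompactSupport (by fun_prop) (.of_compactSpace _)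
  have hdense : Dense (polynomialFunctions s : Set C(s, ℝ)) := by
    rw [dense_iff_closure_eq, ← Subalgebra.topologicalClosure_coe,
      polynomialFunctions.topologicalClosure, Algebra.coe_top]
  have heq : (fun F : C(s, ℝ) => ∫ u, F u ∂μ) = fun F : C(s, ℝ) => ∫ u, F u ∂ν := by
    refine (hcont μ).ext_on hdense (hcont ν) ?_
    rintro F ⟨p, -, rfl⟩
    simpa [h] using (hpow μ p).trans (by simp only [h, hpow ν p])
  exact ext_of_forall_integral_eq_of_IsFiniteMeasure fun F => congrFun heq F.toContinuousMap

/-- The image of the measure `e^{-t} dm(t)` under `t ↦ e^{-t}`, whose `k`-th moment is the Laplace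
transform of `m` at `k + 1`. The projection onto `[0,1]` is immaterial when `m` lives on
`[0,∞)`. -/
noncomputable def unitIntervalMeasure (m : Measure ℝ) : Measure I :=
  (m.withDensity fun t => .ofReal (exp (-t))).map fun t => projIcc 0 1 zero_le_one (exp (-t))

namespace IsLaplaceTransformOf

variable {f : ℝ → ℝ} {m n : Measure ℝ}

lemma coe_projIcc_exp_neg_ae (hf : IsLaplaceTransformOf f m) :
    ∀ᵐ t ∂m, (projIcc (0 : ℝ) 1 zero_le_one (exp (-t)) : ℝ) = exp (-t) := by
  filter_upwards [hf.ae_nonneg] with t ht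
  rw [projIcc_of_mem zero_le_one ⟨(exp_pos _).le, exp_le_one_iff.2 (neg_nonpos.2 ht)⟩]

lemma integral_pow_unitIntervalMeasure (hf : IsLaplaceTransformOf f m) (k : ℕ) :
    ∫ u, (u : ℝ) ^ k ∂unitIntervalMeasure m = f (k + 1) := by
  rw [unitIntervalMeasure, integral_map (by fun_prop) (by fun_prop),
    integral_withDensity_eq_integral_toReal_smul (by fun_prop)
      (ae_of_all _ fun _ => ENNReal.ofReal_lt_top), ← hf.integral_exp (by positivity)]
  refine integral_congr_ae ?_
  filter_upwards [hf.coe_projIcc_exp_neg_ae] with t ht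
  rw [ht, ENNReal.toReal_ofReal (exp_pos _).le, smul_eq_mul, ← exp_nat_mul, ← exp_add]
  ring_nf

lemma map_neg_log_unitIntervalMeasure (hf : IsLaplaceTransformOf f m) :
    (unitIntervalMeasure m).map (fun u : I => -log u) =
      m.withDensity fun t => .ofReal (exp (-t)) := by
  rw [unitIntervalMeasure, Measure.map_map (by fun_prop) (by fun_prop)]
  conv_rhs => rw [← Measure.map_id (μ := m.withDensity _)]
  refine Measure.map_congr (withDensity_absolutelyContinuous _ _ ?_)
  filter_upwards [hf.coe_projIcc_exp_neg_ae] with t ht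
  simp [ht]

theorem unique (hm : IsLaplaceTransformOf f m) (hn : IsLaplaceTransformOf f n) : m = n := by
  have := hm.isFiniteMeasure_withDensity_exp_neg
  have := hn.isFiniteMeasure_withDensity_exp_neg
  have : IsFiniteMeasure (unitIntervalMeasure m) := by unfold unitIntervalMeasure; infer_instance
  have : IsFiniteMeasure (unitIntervalMeasure n) := by unfold unitIntervalMeasure; infer_instance
  have himage : unitIntervalMeasure m = unitIntervalMeasure n := eq_of_integral_pow_eq fun k => by
    rw [hm.integral_pow_unitIntervalMeasure, hn.integral_pow_unitIntervalMeasure]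
  rw [← withDensity_exp_neg_withDensity_inv m, ← hm.map_neg_log_unitIntervalMeasure, himage,
    hn.map_neg_log_unitIntervalMeasure, withDensity_exp_neg_withDensity_inv n]

end IsLaplaceTransformOf

/-- `f` is, on `(0,∞)`, the Laplace transform of a positive measure on `[0,∞)`. By Bernstein's
theorem these are the completely monotonic functions. -/
def IsLaplaceTransform (f : ℝ → ℝ) : Prop :=
  ∃ m, IsLaplaceTransformOf f m

namespace IsLaplaceTransform

variable {f g : ℝ → ℝ}

lemma nonneg (hf : IsLaplaceTransform f) {x : ℝ} (hx : 0 < x) : 0 ≤ f x :=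
  let ⟨_, hm⟩ := hf; hm.nonneg x hx

lemma completelyMonotonic (hf : IsLaplaceTransform f) : CompletelyMonotonic f :=
  let ⟨_, hm⟩ := hf; hm.completelyMonotonic

lemma congr (hf : IsLaplaceTransform f) (hfg : EqOn f g (Ioi 0)) : IsLaplaceTransform g :=
  let ⟨_, hm⟩ := hf; ⟨_, hm.congr hfg⟩

lemma add (hf : IsLaplaceTransform f) (hg : IsLaplaceTransform g) :
    IsLaplaceTransform (fun x => f x + g x) :=
  let ⟨_, hm⟩ := hf; let ⟨_, hn⟩ := hg; ⟨_, hm.add hn⟩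

lemma const_mul (hf : IsLaplaceTransform f) {a : ℝ} (ha : 0 ≤ a) :
    IsLaplaceTransform (fun x => a * f x) :=
  let ⟨_, hm⟩ := hf; ⟨_, hm.const_mul ha⟩

lemma mul (hf : IsLaplaceTransform f) (hg : IsLaplaceTransform g) :
    IsLaplaceTransform (fun x => f x * g x) :=
  let ⟨_, hm⟩ := hf; let ⟨_, hn⟩ := hg; ⟨_, hm.conv hn⟩

lemma sq_sub_sq (hg : IsLaplaceTransform g) (hfg : IsLaplaceTransform (fun x => f x - g x)) :
    IsLaplaceTransform (fun x => f x ^ 2 - g x ^ 2) :=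
  (hfg.mul (hfg.add (hg.const_mul zero_le_two))).congr fun x _ => by ring

lemma pow (hf : IsLaplaceTransform f) (k : ℕ) : IsLaplaceTransform (fun x => f x ^ k) := by
  induction k with
  | zero => simpa only [pow_zero] using ⟨_, IsLaplaceTransformOf.dirac_zero⟩
  | succ k ih => simpa only [pow_succ] using ih.mul hf

lemma of_hasSum {F : ℕ → ℝ → ℝ} (hF : ∀ k, IsLaplaceTransform (F k))
    (hsum : ∀ x, 0 < x → HasSum (fun k => F k x) (f x)) : IsLaplaceTransform f := by
  choose μ hμ using hF
  exact ⟨_, IsLaplaceTransformOf.sum hμ hsum⟩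

lemma exp (hf : IsLaplaceTransform f) : IsLaplaceTransform (fun x => exp (f x)) := by
  refine of_hasSum (F := fun k x => (k.factorial : ℝ)⁻¹ * f x ^ k)
    (fun k => (hf.pow k).const_mul (by positivity)) fun x _ => ?_
  simpa only [div_eq_inv_mul, exp_eq_exp_ℝ] using NormedSpace.expSeries_div_hasSum_exp (f x)

lemma inv_one_sub (hf : IsLaplaceTransform f) (hf₁ : ∀ x, 0 < x → f x < 1) :
    IsLaplaceTransform (fun x => (1 - f x)⁻¹) :=
  of_hasSum hf.pow fun x hx => hasSum_geometric_of_lt_one (hf.nonneg hx) (hf₁ x hx)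

lemma neg_log_one_sub (hf : IsLaplaceTransform f) (hf₁ : ∀ x, 0 < x → f x < 1) :
    IsLaplaceTransform (fun x => -log (1 - f x)) := by
  refine of_hasSum (F := fun k x => ((k : ℝ) + 1)⁻¹ * f x ^ (k + 1))
    (fun k => (hf.pow _).const_mul (by positivity)) fun x hx => ?_
  have habs : |f x| < 1 := by rw [abs_of_nonneg (hf.nonneg hx)]; exact hf₁ x hx
  simpa only [div_eq_inv_mul] using hasSum_pow_div_log_of_abs_lt_one habs

lemma log_one_sub_sub_log_one_sub (hg : IsLaplaceTransform g)
    (hfg : IsLaplaceTransform (fun x => f x - g x)) (hf₁ : ∀ x, 0 < x → f x < 1) :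
    IsLaplaceTransform (fun x => log (1 - g x) - log (1 - f x)) := by
  have hg₁ : ∀ x, 0 < x → g x < 1 := fun x hx =>
    (sub_nonneg.1 (hfg.nonneg hx)).trans_lt (hf₁ x hx)
  have hratio : ∀ x, 0 < x → 1 - (f x - g x) * (1 - g x)⁻¹ = (1 - f x) / (1 - g x) := by
    intro x hx
    have := (sub_pos.2 (hg₁ x hx)).ne'
    field_simp
    ring
  have hlt : ∀ x, 0 < x → (f x - g x) * (1 - g x)⁻¹ < 1 := fun x hx => by
    rw [← sub_pos, hratio x hx]
    exact div_pos (sub_pos.2 (hf₁ x hx)) (sub_pos.2 (hg₁ x hx))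
  refine ((hfg.mul (hg.inv_one_sub hg₁)).neg_log_one_sub hlt).congr fun x hx => ?_
  simp only [hratio x hx, log_div (sub_pos.2 (hf₁ x hx)).ne' (sub_pos.2 (hg₁ x hx)).ne', neg_sub]

end IsLaplaceTransform

lemma isLaplaceTransform_add_rpow_neg {a c : ℝ} (ha : 0 ≤ a) (hc : 0 < c) :
    IsLaplaceTransform (fun x => (x + a) ^ (-c)) := by
  let γ : ℝ → ℝ := fun t => t ^ (c - 1) * exp (-(a * t)) / Gamma c
  have hγ : EqOn (LaplaceTransform γ) (fun x => (x + a) ^ (-c)) (Ioi 0) := fun x hx => by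
    have hxa : 0 < x + a := add_pos_of_pos_of_nonneg hx ha
    calc LaplaceTransform γ x
        = ∫ t in Ioi 0, (Gamma c)⁻¹ * (t ^ (c - 1) * exp (-((x + a) * t))) := by
          simp only [LaplaceTransform, γ]
          congr 1 with t
          rw [add_mul, neg_add, exp_add]
          ring_nf
      _ = (x + a) ^ (-c) := by
          rw [integral_const_mul, integral_rpow_mul_exp_neg_mul_Ioi hc hxa, one_div,
            inv_rpow hxa.le, rpow_neg hxa.le]
          field_simp
  refine ⟨_, (isLaplaceTransformOf_withDensity (by fun_prop) (fun t ht => ?_)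
    fun x hx => ?_).congr hγ⟩
  · positivity
  · refine Integrable.of_integral_ne_zero ((hγ hx).trans_ne (rpow_pos_of_pos ?_ _).ne')
    exact add_pos_of_pos_of_nonneg hx ha

lemma isLaplaceTransform_inv_add {a : ℝ} (ha : 0 ≤ a) :
    IsLaplaceTransform (fun x => (x + a)⁻¹) := by
  simpa only [rpow_neg_one] using isLaplaceTransform_add_rpow_neg ha one_pos

lemma logCompletelyMonotonic_inv_add {a : ℝ} (ha : 0 ≤ a) :
    LogCompletelyMonotonic (fun x => (x + a)⁻¹) := by
  have hcm := (isLaplaceTransform_inv_add ha).completelyMonotonic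
  refine ⟨fun x hx => by positivity, hcm.1, hcm.congr fun x hx => ?_⟩
  have hxa : x + a ≠ 0 := (add_pos_of_pos_of_nonneg hx ha).ne'
  have hderiv := ((hasDerivAt_id' x).add_const a).fun_inv hxa
  simp only [hderiv.deriv]
  field_simp

theorem exists_convolution_semigroup {f : ℝ → ℝ} {μ : Measure ℝ} (hf : IsLaplaceTransformOf f μ)
    (hf₀ : ∀ x, 0 < x → 0 < f x)
    (hpow : ∀ c : ℝ, 0 < c → IsLaplaceTransform (fun x => f x ^ c)) :
    ∃ m : ℝ → Measure ℝ, (∀ c, 0 < c → IsLaplaceTransformOf (fun x => f x ^ c) (m c)) ∧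
      (∀ c d, 0 < c → 0 < d → (m c).conv (m d) = m (c + d)) ∧ m 1 = μ := by
  choose! m hm using hpow
  refine ⟨m, hm, fun c d hc hd => ?_, (hm 1 one_pos).unique (hf.congr fun x _ => ?_)⟩
  · refine (((hm c hc).conv (hm d hd)).congr fun x hx => ?_).unique (hm _ (add_pos hc hd))
    exact (rpow_add (hf₀ x hx) c d).symm
  · exact (rpow_one _).symm

lemma integrableOn_exp_mul_of_abs_le {g : ℝ → ℝ} (hg : Measurable g) {C x : ℝ} (hx : 0 < x)
    (hC : ∀ t, 0 < t → |g t| ≤ C) : IntegrableOn (fun t => exp (-x * t) * g t) (Ioi 0) :=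
  (exp_neg_integrableOn_Ioi 0 hx).mul_bdd (by fun_prop)
    ((ae_restrict_iff' measurableSet_Ioi).2 (ae_of_all _ hC))

lemma integrableOn_exp_mul_sub {g h : ℝ → ℝ} {x : ℝ}
    (hg : IntegrableOn (fun t => exp (-x * t) * g t) (Ioi 0))
    (hh : IntegrableOn (fun t => exp (-x * t) * h t) (Ioi 0)) :
    IntegrableOn (fun t => exp (-x * t) * (g t - h t)) (Ioi 0) := by
  simp only [mul_sub]
  exact hg.sub hh

lemma laplaceTransform_const_mul (a : ℝ) (g : ℝ → ℝ) (x : ℝ) :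
    LaplaceTransform (fun t => a * g t) x = a * LaplaceTransform g x := by
  simp only [LaplaceTransform, mul_left_comm _ a, integral_const_mul]

lemma laplaceTransform_sub {g h : ℝ → ℝ} {x : ℝ}
    (hg : IntegrableOn (fun t => exp (-x * t) * g t) (Ioi 0))
    (hh : IntegrableOn (fun t => exp (-x * t) * h t) (Ioi 0)) :
    LaplaceTransform (fun t => g t - h t) x = LaplaceTransform g x - LaplaceTransform h x := by
  simp only [LaplaceTransform, mul_sub, integral_sub hg hh]

lemma mul_laplaceTransform {g g' : ℝ → ℝ} {x : ℝ} (hg : ∀ t, 0 ≤ t → HasDerivAt g (g' t) t)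
    (hint : IntegrableOn (fun t => exp (-x * t) * g t) (Ioi 0))
    (hint' : IntegrableOn (fun t => exp (-x * t) * g' t) (Ioi 0)) :
    x * LaplaceTransform g x = g 0 + LaplaceTransform g' x := by
  have hderiv : ∀ t, 0 ≤ t → HasDerivAt (fun t => exp (-x * t) * g t)
      (exp (-x * t) * g' t - x * (exp (-x * t) * g t)) t := fun t ht =>
    ((((hasDerivAt_id' t).const_mul (-x)).exp).mul (hg t ht)).congr_deriv (by ring)
  have hintderiv := hint'.sub (hint.const_mul x)
  have hlim := tendsto_zero_of_hasDerivAt_of_integrableOn_Ioi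
    (fun t ht => hderiv t (le_of_lt ht)) hintderiv hint
  have hftc := integral_Ioi_of_hasDerivAt_of_tendsto' (fun t ht => hderiv t ht) hintderiv hlim
  rw [integral_sub hint' (hint.const_mul x), integral_const_mul] at hftc
  simp only [mul_zero, exp_zero, one_mul, zero_sub] at hftc
  unfold LaplaceTransform
  linarith

lemma laplaceTransform_exp_neg_mul {a x : ℝ} (hxa : 0 < x + a) :
    LaplaceTransform (fun t => exp (-(a * t))) x = (x + a)⁻¹ := by
  simp only [LaplaceTransform, ← exp_add]
  have h := integral_exp_mul_Ioi (neg_lt_zero.2 hxa) 0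
  rw [mul_zero, exp_zero, neg_div_neg_eq, one_div] at h
  rw [← h]
  congr 1 with t
  ring_nf

lemma measurable_sigmoid : Measurable sigmoid :=
  continuous_sigmoid.measurable

lemma nielsenBeta_eq_laplaceTransform_sigmoid : nielsenBeta = LaplaceTransform sigmoid := rfl

lemma integrableOn_exp_mul_sigmoid {x : ℝ} (hx : 0 < x) :
    IntegrableOn (fun t => exp (-x * t) * sigmoid t) (Ioi 0) :=
  integrableOn_exp_mul_of_abs_le measurable_sigmoid hx (C := 1) fun t _ => by
    rw [abs_of_nonneg (sigmoid_nonneg t)]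
    exact sigmoid_le_one t

lemma isLaplaceTransformOf_nielsenBeta :
    IsLaplaceTransformOf nielsenBeta
      ((volume.restrict (Ici 0)).withDensity fun t => .ofReal (1 / (1 + exp (-t)))) := by
  simp only [one_div]
  exact isLaplaceTransformOf_withDensity measurable_sigmoid (fun t _ => sigmoid_nonneg t)
    fun x hx => integrableOn_exp_mul_sigmoid hx

lemma sigmoid_mul_one_sub_mem_Icc (t : ℝ) : sigmoid t * (1 - sigmoid t) ∈ Icc 0 (1 / 4) :=
  ⟨mul_nonneg (sigmoid_nonneg t) (sub_nonneg.2 (sigmoid_le_one t)), by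
    linarith [sq_nonneg (sigmoid t - 1 / 2)]⟩

lemma integrableOn_exp_mul_sigmoid_mul_one_sub {x : ℝ} (hx : 0 < x) :
    IntegrableOn (fun t => exp (-x * t) * (sigmoid t * (1 - sigmoid t))) (Ioi 0) :=
  integrableOn_exp_mul_of_abs_le (by have := measurable_sigmoid; fun_prop) hx (C := 1 / 4)
    fun t _ => by
      obtain ⟨h₀, h₁⟩ := sigmoid_mul_one_sub_mem_Icc t
      rwa [abs_of_nonneg h₀]

/-- The density of `nielsenRemainder`: twice the sum of the first two derivatives of `sigmoid`. -/
noncomputable def remainderDensity (t : ℝ) : ℝ :=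
  4 * (sigmoid t * (1 - sigmoid t) ^ 2)

lemma remainderDensity_nonneg (t : ℝ) : 0 ≤ remainderDensity t :=
  mul_nonneg zero_le_four (mul_nonneg (sigmoid_nonneg t) (sq_nonneg _))

lemma measurable_remainderDensity : Measurable remainderDensity := by
  have := measurable_sigmoid
  unfold remainderDensity
  fun_prop

lemma remainderDensity_le (t : ℝ) : remainderDensity t ≤ 1 / 2 * exp (-(1 / 2 * t)) := by
  obtain ⟨hp₀, hp₁⟩ := sigmoid_mul_one_sub_mem_Icc t
  have hσ := sigmoid_pos t
  have hexp : sigmoid t * exp (-(1 / 2 * t)) ^ 2 = 1 - sigmoid t := by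
    rw [← exp_nat_mul, ← sigmoid_neg, ← sigmoid_mul_rexp_neg]
    ring_nf
  have hcube : (sigmoid t * (1 - sigmoid t)) ^ 3 ≤ (1 / 4) ^ 3 := pow_le_pow_left₀ hp₀ hp₁ 3
  refine le_of_sq_le_sq ?_ (by positivity)
  refine le_of_mul_le_mul_left ?_ hσ
  calc sigmoid t * remainderDensity t ^ 2
      = 16 * (sigmoid t * (1 - sigmoid t)) ^ 3 * (1 - sigmoid t) := by
        unfold remainderDensity; ring
    _ ≤ 16 * (1 / 4) ^ 3 * (1 - sigmoid t) := by
        gcongr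
        exact sub_nonneg.2 (sigmoid_le_one t)
    _ = sigmoid t * (1 / 2 * exp (-(1 / 2 * t))) ^ 2 := by rw [← hexp]; ring

lemma integrableOn_exp_mul_remainderDensity {x : ℝ} (hx : 0 < x) :
    IntegrableOn (fun t => exp (-x * t) * remainderDensity t) (Ioi 0) :=
  integrableOn_exp_mul_of_abs_le measurable_remainderDensity hx (C := 1 / 2) fun t ht => by
    have hexp : exp (-(1 / 2 * t)) ≤ 1 := exp_le_one_iff.2 (by linarith)
    rw [abs_of_nonneg (remainderDensity_nonneg t)]
    linarith [remainderDensity_le t]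

/-- The remainder `R` in `2 x (x + 1) β(x) = x + 3/2 + R(x)`. -/
noncomputable def nielsenRemainder : ℝ → ℝ :=
  LaplaceTransform remainderDensity

lemma isLaplaceTransform_nielsenRemainder : IsLaplaceTransform nielsenRemainder :=
  ⟨_, isLaplaceTransformOf_withDensity measurable_remainderDensity
    (fun t _ => remainderDensity_nonneg t) fun _ hx => integrableOn_exp_mul_remainderDensity hx⟩

lemma isLaplaceTransform_sub_nielsenRemainder :
    IsLaplaceTransform (fun x => 1 / 2 * (x + 1 / 2)⁻¹ - nielsenRemainder x) := by
  have hmeas := measurable_remainderDensity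
  have hint : ∀ x : ℝ, 0 < x →
      IntegrableOn (fun t => exp (-x * t) * (1 / 2 * exp (-(1 / 2 * t)))) (Ioi 0) := fun x hx =>
    integrableOn_exp_mul_of_abs_le (by fun_prop) hx (C := 1 / 2) fun t ht => by
      have hexp : exp (-(1 / 2 * t)) ≤ 1 := exp_le_one_iff.2 (by linarith)
      rw [abs_of_pos (by positivity)]
      linarith
  refine ⟨_, (isLaplaceTransformOf_withDensity
    (g := fun t => 1 / 2 * exp (-(1 / 2 * t)) - remainderDensity t) (by fun_prop)
    (fun t _ => sub_nonneg.2 (remainderDensity_le t)) fun x hx => ?_).congr fun x hx => ?_⟩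
  · exact integrableOn_exp_mul_sub (hint x hx) (integrableOn_exp_mul_remainderDensity hx)
  · simp only [laplaceTransform_sub (hint x hx) (integrableOn_exp_mul_remainderDensity hx),
      laplaceTransform_const_mul, laplaceTransform_exp_neg_mul (add_pos hx one_half_pos),
      nielsenRemainder]

lemma mul_nielsenBeta_eq_add_laplaceTransform {x : ℝ} (hx : 0 < x) :
    x * nielsenBeta x = 1 / 2 + LaplaceTransform (fun t => sigmoid t * (1 - sigmoid t)) x := by
  rw [nielsenBeta_eq_laplaceTransform_sigmoid, mul_laplaceTransform
    (fun t _ => hasDerivAt_sigmoid t) (integrableOn_exp_mul_sigmoid hx)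
    (integrableOn_exp_mul_sigmoid_mul_one_sub hx), sigmoid_zero, one_div]

lemma hasDerivAt_sigmoid_mul_one_sub (t : ℝ) :
    HasDerivAt (fun t => sigmoid t * (1 - sigmoid t))
      (1 / 2 * remainderDensity t - sigmoid t * (1 - sigmoid t)) t :=
  ((hasDerivAt_sigmoid t).mul ((hasDerivAt_sigmoid t).const_sub 1)).congr_deriv (by
    unfold remainderDensity; ring)

lemma two_mul_mul_nielsenBeta {x : ℝ} (hx : 0 < x) :
    2 * x * (x + 1) * nielsenBeta x = x + 3 / 2 + nielsenRemainder x := by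
  have hp := integrableOn_exp_mul_sigmoid_mul_one_sub hx
  have hr : IntegrableOn (fun t => exp (-x * t) * (1 / 2 * remainderDensity t)) (Ioi 0) := by
    simp only [mul_left_comm _ (1 / 2 : ℝ)]
    exact (integrableOn_exp_mul_remainderDensity hx).const_mul _
  have hparts := mul_laplaceTransform (fun t _ => hasDerivAt_sigmoid_mul_one_sub t) hp
    (integrableOn_exp_mul_sub hr hp)
  rw [laplaceTransform_sub hr hp, laplaceTransform_const_mul, ← nielsenRemainder,
    sigmoid_zero] at hparts
  linear_combination 2 * (x + 1) * mul_nielsenBeta_eq_add_laplaceTransform hx + 2 * hparts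

lemma nielsenBeta_pos {x : ℝ} (hx : 0 < x) : 0 < nielsenBeta x := by
  have hR := isLaplaceTransform_nielsenRemainder.nonneg hx
  refine pos_of_mul_pos_right ?_ (by positivity : 0 ≤ 2 * x * (x + 1))
  rw [two_mul_mul_nielsenBeta hx]
  positivity

lemma isLaplaceTransform_sub_nielsenRemainder_mul_inv :
    IsLaplaceTransform (fun x =>
      1 / 2 * (x + 1 / 2)⁻¹ - nielsenRemainder x * (x + 3 / 2)⁻¹) := by
  have hinv := isLaplaceTransform_inv_add (a := 3 / 2) (by norm_num)
  refine ((hinv.const_mul one_half_pos.le).add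
    (isLaplaceTransform_sub_nielsenRemainder.mul hinv)).congr fun x hx => ?_
  have hx : 0 < x := hx
  field_simp
  ring

lemma half_mul_inv_add_half_lt_one {x : ℝ} (hx : 0 < x) : 1 / 2 * (x + 1 / 2)⁻¹ < 1 := by
  rw [← div_eq_mul_inv, div_lt_one (by positivity)]
  linarith

lemma nielsenRemainder_mul_inv_lt_one {x : ℝ} (hx : 0 < x) :
    nielsenRemainder x * (x + 3 / 2)⁻¹ < 1 :=
  (sub_nonneg.1 (isLaplaceTransform_sub_nielsenRemainder_mul_inv.nonneg hx)).trans_lt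
    (half_mul_inv_add_half_lt_one hx)

lemma log_mul_nielsenBeta {x : ℝ} (hx : 0 < x) :
    log (2 * (x + 1 / 2) * nielsenBeta x) =
      -log (1 - (x + 3 / 2)⁻¹) + -log (1 - nielsenRemainder x * (x + 3 / 2)⁻¹) +
        (log (1 - (nielsenRemainder x * (x + 3 / 2)⁻¹) ^ 2) -
          log (1 - (1 / 2 * (x + 1 / 2)⁻¹) ^ 2)) := by
  have hR := isLaplaceTransform_nielsenRemainder.nonneg hx
  have hQ₁ := nielsenRemainder_mul_inv_lt_one hx
  have hβ : 2 * (x + 1 / 2) * nielsenBeta x = (x + 3 / 2) * (x + 1 / 2) *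
      (1 + nielsenRemainder x * (x + 3 / 2)⁻¹) / (x * (x + 1)) := by
    have hcancel : (x + 3 / 2) * (x + 3 / 2)⁻¹ = 1 := mul_inv_cancel₀ (by positivity)
    rw [eq_div_iff (by positivity)]
    linear_combination
      (x + 1 / 2) * two_mul_mul_nielsenBeta hx - (x + 1 / 2) * nielsenRemainder x * hcancel
  have hinv : 1 - (x + 3 / 2)⁻¹ = (x + 1 / 2) / (x + 3 / 2) := by field_simp; ring
  have hE : 1 - (1 / 2 * (x + 1 / 2)⁻¹) ^ 2 = x * (x + 1) / (x + 1 / 2) ^ 2 := by field_simp; ring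
  have hQ₀ : 0 ≤ nielsenRemainder x * (x + 3 / 2)⁻¹ := by positivity
  generalize nielsenRemainder x * (x + 3 / 2)⁻¹ = Q at *
  have hsq : 1 - Q ^ 2 = (1 - Q) * (1 + Q) := by ring
  rw [hβ, hinv, hE, hsq, log_div (by positivity) (by positivity),
    log_mul (by positivity) (by positivity), log_mul (by positivity) (by positivity),
    log_div (by positivity) (by positivity), log_div (by positivity) (by positivity),
    log_mul (sub_pos.2 hQ₁).ne' (by positivity), log_pow]
  ring

lemma isLaplaceTransform_log_mul_nielsenBeta :
    IsLaplaceTransform (fun x => log (2 * (x + 1 / 2) * nielsenBeta x)) := by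
  have hinv := isLaplaceTransform_inv_add (a := 3 / 2) (by norm_num)
  have hinv₁ : ∀ x : ℝ, 0 < x → (x + 3 / 2)⁻¹ < 1 := fun x hx => inv_lt_one_of_one_lt₀ (by linarith)
  have hQ := isLaplaceTransform_nielsenRemainder.mul hinv
  have hE₁ : ∀ x : ℝ, 0 < x → (1 / 2 * (x + 1 / 2)⁻¹) ^ 2 < 1 := fun x hx =>
    pow_lt_one₀ (by positivity) (half_mul_inv_add_half_lt_one hx) two_ne_zero
  exact (((hinv.neg_log_one_sub hinv₁).add
    (hQ.neg_log_one_sub fun _ hx => nielsenRemainder_mul_inv_lt_one hx)).add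
    ((hQ.pow 2).log_one_sub_sub_log_one_sub
      (hQ.sq_sub_sq isLaplaceTransform_sub_nielsenRemainder_mul_inv) hE₁)).congr
        fun x hx => (log_mul_nielsenBeta hx).symm

lemma nielsenBeta_eq_mul_exp {x : ℝ} (hx : 0 < x) :
    nielsenBeta x =
      1 / 2 * ((x + 1 / 2)⁻¹ * exp (log (2 * (x + 1 / 2) * nielsenBeta x))) := by
  have hβ := nielsenBeta_pos hx
  rw [exp_log (by positivity)]
  field_simp

theorem logCompletelyMonotonic_nielsenBeta : LogCompletelyMonotonic nielsenBeta := by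
  have hexp :=
    isLaplaceTransform_log_mul_nielsenBeta.completelyMonotonic.logCompletelyMonotonic_exp
  exact (((logCompletelyMonotonic_inv_add one_half_pos.le).mul hexp).const_mul
    one_half_pos).congr fun x hx => (nielsenBeta_eq_mul_exp hx).symm

theorem isLaplaceTransform_nielsenBeta_rpow {c : ℝ} (hc : 0 < c) :
    IsLaplaceTransform (fun x => nielsenBeta x ^ c) := by
  have hexp := (isLaplaceTransform_log_mul_nielsenBeta.const_mul hc.le).exp
  refine (((isLaplaceTransform_add_rpow_neg one_half_pos.le hc).mul hexp).const_mul
    (rpow_nonneg one_half_pos.le c)).congr fun x hx => ?_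
  have hx' : (0 : ℝ) < x + 1 / 2 := add_pos hx one_half_pos
  conv_rhs => rw [nielsenBeta_eq_mul_exp hx]
  rw [mul_rpow one_half_pos.le (by positivity), mul_rpow (by positivity) (exp_pos _).le,
    inv_rpow hx'.le, ← rpow_neg hx'.le, ← exp_mul, mul_comm _ c]

/-- Theorem: Nielsen's beta function is logarithmically completely monotonic, and there is a
convolution semigroup of positive measures `m_c` on `[0,∞)` with `β(x)^c = ∫ e^{-xt} dm_c(t)`
and `dm₁(t) = dt/(1+e^{-t})`. -/
theorem stmt2 :
    LogCompletelyMonotonic nielsenBeta ∧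
    ∃ m : ℝ → Measure ℝ,
      (∀ c : ℝ, 0 < c → (m c) (Set.Iio 0) = 0) ∧
      (∀ c : ℝ, 0 < c → ∀ x : ℝ, 0 < x →
        nielsenBeta x ^ c = ∫ t, Real.exp (-x * t) ∂(m c)) ∧
      (∀ c d : ℝ, 0 < c → 0 < d →
        Measure.map (fun p : ℝ × ℝ => p.1 + p.2) ((m c).prod (m d)) = m (c + d)) ∧
      m 1 = (volume.restrict (Set.Ici (0:ℝ))).withDensity
        (fun t => ENNReal.ofReal (1 / (1 + Real.exp (-t)))) := by
  obtain ⟨m, hm, hconv, hm₁⟩ := exists_convolution_semigroup isLaplaceTransformOf_nielsenBeta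
    (fun _ hx => nielsenBeta_pos hx) fun _ hc => isLaplaceTransform_nielsenBeta_rpow hc
  exact ⟨logCompletelyMonotonic_nielsenBeta, m, fun c hc => (hm c hc).measure_Iio,
    fun c hc x hx => ((hm c hc).integral_exp hx).symm, hconv, hm₁⟩
end

section
/- For every real r > 2 there exist c > 0 and a complex number z_c with Re z_c > 0 such that (c/(1+c)) z_c^{-r} + (1/(1+c)) (z_c+1)^{-r} = 0, where complex powers are defined via the principal logarithm. Consequently, for every r > 2 there is a function of the form g_c(x) = (c/(1+c)) x^{-r} + (1/(1+c)) (x+1)^{-r}, which is a generalized Stieltjes function of order r on (0,∞), whose holomorphic extension to the right half-plane has a zero there, so g_c is not logarithmically completely monotonic. -/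
open MeasureTheory Filter Set

/-!
A completely monotonic function `h` has Taylor coefficients of alternating sign, so at a point
`a > 0` all terms of its Taylor expansion towards `x ∈ (0, a)` are nonnegative and each of them
is at most `h x`. The Taylor series at `a` therefore converges in the disc `|z - a| < a`, and
these discs exhaust the right half-plane. If `g` is logarithmically completely monotonic with
holomorphic extension `G`, then `-G'/G` continues holomorphically to every such disc as some
`H`, and the linear equation `G' = -H G` forces a solution with a zero to vanish identically.
Hence `G` has no zeros.

A zero of `c z ^ (-r) + (z + 1) ^ (-r)` amounts to `w ^ (-r) = -c` for `w = 1 + 1 / z`, and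
`Re w > 1` implies `Re z > 0`. For `r > 2` the ray with argument `π / r` meets the half-plane
`Re w > 1`, and `w ^ (-r)` is negative along it.
-/

section Analytic

open Topology

lemma iteratedDeriv_ofReal_of_eqOn {F : ℂ → ℂ} {h : ℝ → ℝ} {U : Set ℝ} (hU : IsOpen U)
    (hF : ∀ x ∈ U, AnalyticAt ℂ F x) (hFh : ∀ x ∈ U, F x = h x) (n : ℕ) :
    ∀ x ∈ U, iteratedDeriv n F x = (iteratedDeriv n h x : ℝ) := by
  induction n with
  | zero => simpa using hFh
  | succ n ih =>
    intro x hx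
    have ih_near : ∀ᶠ y : ℝ in 𝓝 x, iteratedDeriv n F y = (iteratedDeriv n h y : ℝ) :=
      (hU.eventually_mem hx).mono ih
    have hasDeriv_F : HasDerivAt (iteratedDeriv n F) (iteratedDeriv (n + 1) F x) x := by
      rw [iteratedDeriv_succ, iteratedDeriv_eq_iterate]
      exact ((hF x hx).iterated_deriv n).differentiableAt.hasDerivAt
    have hasDeriv_h : HasDerivAt (iteratedDeriv n h) (iteratedDeriv (n + 1) F x).re x :=
      hasDeriv_F.real_of_complex.congr_of_eventuallyEq <|
        ih_near.mono fun y hy => by simp [hy]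
    rw [iteratedDeriv_succ (f := h), hasDeriv_h.deriv]
    exact (hasDeriv_F.comp_ofReal.congr_of_eventuallyEq <| ih_near.mono fun y hy => hy.symm).unique
      hasDeriv_h.ofReal_comp

lemma exists_analyticOnNhd_ball_of_taylor_bound {𝕜 : Type*} [RCLike 𝕜] {F : 𝕜 → 𝕜} {a : 𝕜} {R : ℝ}
    (hF : AnalyticAt 𝕜 F a)
    (hbound : ∀ ρ, 0 < ρ → ρ < R →
      ∃ C, ∀ n : ℕ, ‖iteratedDeriv n F a‖ / (n.factorial : ℝ) * ρ ^ n ≤ C) :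
    ∃ H : 𝕜 → 𝕜, AnalyticOnNhd 𝕜 H (Metric.ball a R) ∧ H =ᶠ[𝓝 a] F := by
  set p := FormalMultilinearSeries.ofScalars 𝕜
    (fun n : ℕ => iteratedDeriv n F a / (n.factorial : 𝕜)) with hp
  obtain ⟨ε, hFp⟩ : HasFPowerSeriesAt F p a := hF.hasFPowerSeriesAt
  have le_radius : ENNReal.ofReal R ≤ p.radius := by
    refine ENNReal.le_of_forall_pos_nnreal_lt fun ρ hρ hρR => ?_
    obtain ⟨C, hC⟩ := hbound ρ hρ (ENNReal.coe_lt_ofReal.1 hρR)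
    refine p.le_radius_of_bound C fun n => ?_
    simpa [hp, FormalMultilinearSeries.ofScalars_norm] using hC n
  have sum_series : HasFPowerSeriesOnBall (fun z => p.sum (z - a)) p a p.radius := by
    simpa using (p.hasFPowerSeriesOnBall (hFp.r_pos.trans_le hFp.r_le)).comp_sub a
  refine ⟨fun z => p.sum (z - a), fun z hz => sum_series.analyticOnNhd z ?_, ?_⟩
  · exact Metric.eball_subset_eball le_radius (by rwa [Metric.eball_ofReal])
  · exact Filter.eventuallyEq_of_mem (Metric.eball_mem_nhds a hFp.r_pos)
      ((sum_series.mono hFp.r_pos hFp.r_le).unique hFp)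

variable {𝕜 : Type*} [NontriviallyNormedField 𝕜] [CompleteSpace 𝕜] [CharZero 𝕜] {G H : 𝕜 → 𝕜}

-- The order of vanishing `m` of `G` satisfies `m = m + ord H + 1`, so it is infinite.
lemma eventually_eq_zero_of_deriv_eq_mul {z : 𝕜} (hG : AnalyticAt 𝕜 G z) (hH : AnalyticAt 𝕜 H z)
    (hderiv : deriv G =ᶠ[𝓝 z] H * G) (hz : G z = 0) : ∀ᶠ w in 𝓝 z, G w = 0 := by
  have order_eq : analyticOrderAt H z + analyticOrderAt G z + 1 = analyticOrderAt G z := by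
    simpa [analyticOrderAt_congr hderiv, analyticOrderAt_mul hH hG, hz]
      using hG.analyticOrderAt_deriv_add_one
  rw [← analyticOrderAt_eq_top]
  by_contra order_ne_top
  have order_lt : analyticOrderAt G z < analyticOrderAt G z + 1 :=
    ENat.lt_add_one_iff order_ne_top |>.2 le_rfl
  refine order_lt.not_ge ?_
  calc analyticOrderAt G z + 1
      ≤ analyticOrderAt H z + analyticOrderAt G z + 1 := by gcongr; exact le_add_self
    _ = analyticOrderAt G z := order_eq

lemma eqOn_zero_of_deriv_eq_mul {U : Set 𝕜} {z : 𝕜} (hU : IsOpen U) (hconn : IsPreconnected U)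
    (hG : AnalyticOnNhd 𝕜 G U) (hH : AnalyticOnNhd 𝕜 H U) (hderiv : EqOn (deriv G) (H * G) U)
    (hzU : z ∈ U) (hz : G z = 0) : EqOn G 0 U :=
  hG.eqOn_zero_of_preconnected_of_eventuallyEq_zero hconn hzU <|
    eventually_eq_zero_of_deriv_eq_mul (hG z hzU) (hH z hzU)
      (hderiv.eventuallyEq_of_mem (hU.mem_nhds hzU)) hz

end Analytic

section RightHalfPlane

lemma re_pos_of_mem_ball_self {a : ℝ} {z : ℂ} (hz : z ∈ Metric.ball (a : ℂ) a) : 0 < z.re := by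
  have norm_lt : ‖z - a‖ < a := mem_ball_iff_norm.1 hz
  have re_gt : -a < (z - a).re := (abs_lt.1 ((Complex.abs_re_le_norm _).trans_lt norm_lt)).1
  rw [Complex.sub_re, Complex.ofReal_re] at re_gt
  linarith

-- `|z - a| < a` unfolds to `|z|² < 2 a Re z`.
lemma exists_mem_ball_self_of_re_pos {z : ℂ} (hz : 0 < z.re) :
    ∃ a : ℝ, 0 < a ∧ z ∈ Metric.ball (a : ℂ) a := by
  have normSq_pos : 0 < Complex.normSq z := Complex.normSq_pos.2 (by rintro rfl; simp at hz)
  set a := Complex.normSq z / z.re with ha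
  have a_pos : 0 < a := by positivity
  have a_mul_re : a * z.re = z.re * z.re + z.im * z.im := by
    rw [ha, div_mul_cancel₀ _ hz.ne', Complex.normSq_apply]
  refine ⟨a, a_pos, mem_ball_iff_norm.2 (lt_of_pow_lt_pow_left₀ 2 a_pos.le ?_)⟩
  rw [Complex.sq_norm, Complex.normSq_apply, Complex.sub_re, Complex.sub_im, Complex.ofReal_re,
    Complex.ofReal_im]
  nlinarith [mul_pos a_pos hz]

lemma mul_cpow_of_re_pos {w z : ℂ} (hw : 0 < w.re) (hz : 0 < z.re) (s : ℂ) :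
    (w * z) ^ s = w ^ s * z ^ s := by
  have w_ne : w ≠ 0 := Complex.slitPlane_ne_zero (Or.inl hw)
  have z_ne : z ≠ 0 := Complex.slitPlane_ne_zero (Or.inl hz)
  have arg_w := abs_lt.1 (Complex.abs_arg_lt_pi_div_two_iff.2 (Or.inl hw))
  have arg_z := abs_lt.1 (Complex.abs_arg_lt_pi_div_two_iff.2 (Or.inl hz))
  have log_mul : Complex.log (w * z) = Complex.log w + Complex.log z :=
    Complex.log_mul w_ne z_ne ⟨by linarith, by linarith⟩
  rw [Complex.cpow_def_of_ne_zero (mul_ne_zero w_ne z_ne), Complex.cpow_def_of_ne_zero w_ne,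
    Complex.cpow_def_of_ne_zero z_ne, log_mul, add_mul, Complex.exp_add]

end RightHalfPlane

namespace CompletelyMonotonic

variable {h : ℝ → ℝ}

lemma abs_iteratedDeriv (hh : CompletelyMonotonic h) (n : ℕ) {x : ℝ} (hx : 0 < x) :
    |iteratedDeriv n h x| = (-1) ^ n * iteratedDeriv n h x := by
  rw [← abs_of_nonneg (hh.2 n x hx), abs_mul, abs_neg_one_pow, one_mul]

lemma iteratedDeriv_mul_sub_pow (hh : CompletelyMonotonic h) (n : ℕ) {y : ℝ} (hy : 0 < y)
    (x a : ℝ) : iteratedDeriv n h y * (x - a) ^ n = |iteratedDeriv n h y| * (a - x) ^ n := by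
  rw [hh.abs_iteratedDeriv n hy, ← neg_sub a x, neg_pow (a - x)]
  ring

lemma sum_abs_taylor_le (hh : CompletelyMonotonic h) {x a : ℝ} (hx : 0 < x) (hxa : x < a) (n : ℕ) :
    ∑ k ∈ Finset.range (n + 1), |iteratedDeriv k h a| / (k.factorial : ℝ) * (a - x) ^ k ≤ h x := by
  have a_pos : 0 < a := hx.trans hxa
  have contDiffOn : ContDiffOn ℝ (n + 1 : ℕ) h (uIcc a x) := fun y hy => by
    rw [uIcc_of_ge hxa.le] at hy
    exact ((hh.1 y (hx.trans_le hy.1)).of_le (mod_cast le_top)).contDiffWithinAt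
  obtain ⟨y, hy, lagrange⟩ :=
    taylor_mean_remainder_lagrange_iteratedDeriv (n := n) hxa.ne' (mod_cast contDiffOn)
  rw [uIoo_of_gt hxa] at hy
  have remainder_nonneg :
      0 ≤ iteratedDeriv (n + 1) h y * (x - a) ^ (n + 1) / ((n + 1).factorial : ℝ) := by
    rw [hh.iteratedDeriv_mul_sub_pow (n + 1) (hx.trans hy.1)]
    have : 0 < a - x := sub_pos.2 hxa
    positivity
  have taylor_eq : taylorWithinEval h n (uIcc a x) a x =
      ∑ k ∈ Finset.range (n + 1), |iteratedDeriv k h a| / (k.factorial : ℝ) * (a - x) ^ k := by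
    rw [taylor_within_apply]
    refine Finset.sum_congr rfl fun k _ => ?_
    rw [iteratedDerivWithin_eq_iteratedDeriv (uniqueDiffOn_uIcc hxa.ne')
      ((hh.1 a a_pos).of_le (mod_cast le_top)) left_mem_uIcc, smul_eq_mul, mul_assoc,
      mul_comm (_ ^ k), hh.iteratedDeriv_mul_sub_pow k a_pos]
    ring
  linarith

lemma abs_taylor_term_le (hh : CompletelyMonotonic h) {x a : ℝ} (hx : 0 < x) (hxa : x < a) (n : ℕ) :
    |iteratedDeriv n h a| / (n.factorial : ℝ) * (a - x) ^ n ≤ h x := by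
  have : 0 < a - x := sub_pos.2 hxa
  exact (Finset.single_le_sum (fun k _ => by positivity) (Finset.self_mem_range_succ n)).trans
    (hh.sum_abs_taylor_le hx hxa n)

lemma exists_analyticOnNhd_ball (hh : CompletelyMonotonic h) {F : ℂ → ℂ}
    (hF : ∀ x : ℝ, 0 < x → AnalyticAt ℂ F x) (hFh : ∀ x : ℝ, 0 < x → F x = h x)
    {a : ℝ} (ha : 0 < a) :
    ∃ H : ℂ → ℂ, AnalyticOnNhd ℂ H (Metric.ball (a : ℂ) a) ∧ H =ᶠ[nhds (a : ℂ)] F := by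
  refine exists_analyticOnNhd_ball_of_taylor_bound (hF a ha) fun ρ hρ hρa =>
    ⟨h (a - ρ), fun n => ?_⟩
  rw [iteratedDeriv_ofReal_of_eqOn isOpen_Ioi hF hFh n a ha, Complex.norm_real, Real.norm_eq_abs]
  simpa using hh.abs_taylor_term_le (sub_pos.2 hρa) (sub_lt_self a hρ) n

end CompletelyMonotonic

namespace LogCompletelyMonotonic

variable {g : ℝ → ℝ} {G : ℂ → ℂ}

lemma exists_deriv_eq_mul_on_ball (hg : LogCompletelyMonotonic g)
    (hG : AnalyticOnNhd ℂ G {z | 0 < z.re}) (hGg : ∀ x : ℝ, 0 < x → G x = g x)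
    {a : ℝ} (ha : 0 < a) :
    ∃ H : ℂ → ℂ, AnalyticOnNhd ℂ H (Metric.ball (a : ℂ) a) ∧
      EqOn (deriv G) (H * G) (Metric.ball (a : ℂ) a) := by
  have analytic_real : ∀ x : ℝ, 0 < x → AnalyticAt ℂ G x := fun x hx => hG x (by simpa using hx)
  have ne_zero_real : ∀ x : ℝ, 0 < x → G x ≠ 0 := fun x hx => by
    rw [hGg x hx]
    exact_mod_cast (hg.1 x hx).ne'
  have deriv_real : ∀ x : ℝ, 0 < x → deriv G x = (deriv g x : ℝ) := fun x hx => by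
    simpa using iteratedDeriv_ofReal_of_eqOn isOpen_Ioi analytic_real hGg 1 x hx
  obtain ⟨K, hK, hK_near⟩ := hg.2.2.exists_analyticOnNhd_ball (F := fun z => -deriv G z / G z)
    (fun x hx => (analytic_real x hx).deriv.neg.div (analytic_real x hx) (ne_zero_real x hx))
    (fun x hx => by simp only [deriv_real x hx, hGg x hx, Complex.ofReal_div, Complex.ofReal_neg])
    ha
  have hG_ball : AnalyticOnNhd ℂ G (Metric.ball (a : ℂ) a) :=
    hG.mono fun z hz => re_pos_of_mem_ball_self hz
  refine ⟨-K, hK.neg, hG_ball.deriv.eqOn_of_preconnected_of_eventuallyEq (hK.neg.mul hG_ball)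
    (convex_ball _ _).isPreconnected (Metric.mem_ball_self ha) ?_⟩
  filter_upwards [hK_near, (analytic_real a ha).continuousAt.eventually_ne (ne_zero_real a ha)]
    with w hKw hGw
  simp [hKw, neg_div, div_mul_cancel₀ _ hGw]

theorem ne_zero_of_re_pos (hg : LogCompletelyMonotonic g)
    (hG : AnalyticOnNhd ℂ G {z | 0 < z.re}) (hGg : ∀ x : ℝ, 0 < x → G x = g x)
    {z : ℂ} (hz : 0 < z.re) : G z ≠ 0 := by
  intro hGz
  obtain ⟨a, ha, hza⟩ := exists_mem_ball_self_of_re_pos hz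
  obtain ⟨H, hH, hderiv⟩ := hg.exists_deriv_eq_mul_on_ball hG hGg ha
  have G_eq_zero : EqOn G 0 (Metric.ball (a : ℂ) a) :=
    eqOn_zero_of_deriv_eq_mul Metric.isOpen_ball (convex_ball _ _).isPreconnected
      (hG.mono fun w hw => re_pos_of_mem_ball_self hw) hH hderiv hza hGz
  have g_eq_zero : (g a : ℂ) = 0 := (hGg a ha).symm.trans (G_eq_zero (Metric.mem_ball_self ha))
  exact (hg.1 a ha).ne' (mod_cast g_eq_zero)

end LogCompletelyMonotonic

namespace IsGenStieltjes

variable {r : ℝ} {f g : ℝ → ℝ}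

lemma add (hf : IsGenStieltjes r f) (hg : IsGenStieltjes r g) :
    IsGenStieltjes r (fun x => f x + g x) := by
  obtain ⟨μ, c, hc, hμ, hfμ⟩ := hf
  obtain ⟨ν, d, hd, hν, hgν⟩ := hg
  refine ⟨μ + ν, c + d, add_nonneg hc hd, by simp [hμ, hν], fun x hx => ?_⟩
  obtain ⟨int_μ, f_eq⟩ := hfμ x hx
  obtain ⟨int_ν, g_eq⟩ := hgν x hx
  refine ⟨int_μ.add_measure int_ν, ?_⟩
  simp only [integral_add_measure int_μ int_ν, f_eq, g_eq]
  ring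

lemma const_mul {A : ℝ} (hA : 0 ≤ A) (hf : IsGenStieltjes r f) :
    IsGenStieltjes r (fun x => A * f x) := by
  obtain ⟨μ, c, hc, hμ, hfμ⟩ := hf
  refine ⟨ENNReal.ofReal A • μ, A * c, mul_nonneg hA hc, by simp [hμ], fun x hx => ?_⟩
  obtain ⟨int_μ, f_eq⟩ := hfμ x hx
  refine ⟨int_μ.smul_measure ENNReal.ofReal_ne_top, ?_⟩
  simp only [integral_smul_measure, ENNReal.toReal_ofReal hA, f_eq, smul_eq_mul, mul_add]

lemma add_rpow_neg (r : ℝ) {t : ℝ} (ht : 0 ≤ t) : IsGenStieltjes r (fun x => (x + t) ^ (-r)) :=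
  ⟨Measure.dirac t, 0, le_rfl, by simp [ht], fun _ _ => ⟨integrable_dirac (by simp), by simp⟩⟩

lemma rpow_neg (r : ℝ) : IsGenStieltjes r (fun x => x ^ (-r)) := by
  simpa using add_rpow_neg r le_rfl

end IsGenStieltjes

section TwoTermSum

lemma ofReal_mul_exp_pi_div_cpow_neg {ρ r : ℝ} (hρ : 0 < ρ) (hr : 1 ≤ r) :
    ((ρ : ℂ) * Complex.exp ((Real.pi / r : ℝ) * Complex.I)) ^ (-(r : ℂ)) =
      -((ρ ^ (-r) : ℝ) : ℂ) := by
  have r_pos : 0 < r := one_pos.trans_le hr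
  have ρ_ne : (ρ : ℂ) ≠ 0 := mod_cast hρ.ne'
  have r_ne : (r : ℂ) ≠ 0 := mod_cast r_pos.ne'
  have angle_pos : 0 < Real.pi / r := by positivity
  have angle_le : Real.pi / r ≤ Real.pi := div_le_self Real.pi_pos.le hr
  have log_exp : Complex.log (Complex.exp ((Real.pi / r : ℝ) * Complex.I)) =
      (Real.pi / r : ℝ) * Complex.I :=
    Complex.log_exp (by simpa using by linarith [Real.pi_pos]) (by simpa using angle_le)
  have angle_mul : ((Real.pi / r : ℝ) : ℂ) * Complex.I * -(r : ℂ) = -(Real.pi * Complex.I) := by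
    push_cast
    field_simp
  rw [Complex.cpow_def_of_ne_zero (mul_ne_zero ρ_ne (Complex.exp_ne_zero _)),
    Complex.log_ofReal_mul hρ (Complex.exp_ne_zero _), log_exp, add_mul, Complex.exp_add, angle_mul,
    Complex.exp_neg, Complex.exp_pi_mul_I, Complex.ofReal_cpow hρ.le,
    Complex.cpow_def_of_ne_zero ρ_ne, Complex.ofReal_log hρ.le]
  norm_num

lemma exists_re_gt_one_cpow_neg_eq {r : ℝ} (hr : 2 < r) :
    ∃ c : ℝ, 0 < c ∧ ∃ w : ℂ, 1 < w.re ∧ w ^ (-(r : ℂ)) = -(c : ℂ) := by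
  have angle_pos : 0 < Real.pi / r := by positivity
  have angle_lt : Real.pi / r < Real.pi / 2 :=
    div_lt_div_of_pos_left Real.pi_pos two_pos hr
  have cos_pos : 0 < Real.cos (Real.pi / r) :=
    Real.cos_pos_of_mem_Ioo ⟨by linarith [Real.pi_pos], angle_lt⟩
  have radius_pos : 0 < 2 / Real.cos (Real.pi / r) := by positivity
  refine ⟨_, Real.rpow_pos_of_pos radius_pos (-r), _, ?_,
    ofReal_mul_exp_pi_div_cpow_neg radius_pos (by linarith)⟩
  rw [Complex.re_ofReal_mul, Complex.exp_ofReal_mul_I_re, div_mul_cancel₀ _ cos_pos.ne']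
  exact one_lt_two

lemma exists_re_pos_add_one_cpow_neg_eq {r : ℝ} (hr : 2 < r) :
    ∃ c : ℝ, 0 < c ∧ ∃ z : ℂ, 0 < z.re ∧ (z + 1) ^ (-(r : ℂ)) = -(c : ℂ) * z ^ (-(r : ℂ)) := by
  obtain ⟨c, hc, w, hw, hwc⟩ := exists_re_gt_one_cpow_neg_eq hr
  have re_sub_pos : 0 < (w - 1).re := by simpa using hw
  have sub_ne : w - 1 ≠ 0 := Complex.slitPlane_ne_zero (Or.inl re_sub_pos)
  have re_inv_pos : 0 < ((w - 1)⁻¹).re := by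
    rw [Complex.inv_re]
    exact div_pos re_sub_pos (Complex.normSq_pos.2 sub_ne)
  have inv_add_one : (w - 1)⁻¹ + 1 = w * (w - 1)⁻¹ := by
    field_simp
    ring
  refine ⟨c, hc, (w - 1)⁻¹, re_inv_pos, ?_⟩
  rw [inv_add_one, mul_cpow_of_re_pos (one_pos.trans hw) re_inv_pos, hwc]

lemma analyticOnNhd_cpow_add_cpow_add_one (A B s : ℂ) :
    AnalyticOnNhd ℂ (fun z : ℂ => A * z ^ s + B * (z + 1) ^ s) {z | 0 < z.re} := by
  intro z hz
  have z_mem : z ∈ Complex.slitPlane := Or.inl hz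
  have add_one_mem : z + 1 ∈ Complex.slitPlane := Or.inl (by simpa using add_pos hz one_pos)
  fun_prop (disch := assumption)

lemma not_logCompletelyMonotonic_of_cpow_sum_eq_zero {r A B : ℝ} {z : ℂ} (hz : 0 < z.re)
    (hzero : (A : ℂ) * z ^ (-(r : ℂ)) + (B : ℂ) * (z + 1) ^ (-(r : ℂ)) = 0) :
    ¬ LogCompletelyMonotonic (fun x => A * x ^ (-r) + B * (x + 1) ^ (-r)) := fun hg =>
  hg.ne_zero_of_re_pos (analyticOnNhd_cpow_add_cpow_add_one A B (-r))
    (fun x hx => by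
      push_cast [Complex.ofReal_cpow hx.le, Complex.ofReal_cpow (add_pos hx one_pos).le]
      rfl)
    hz hzero

end TwoTermSum

/-- Theorem: for every `r > 2` there is `c > 0` such that the generalized Stieltjes function
`g_c(x) = (c/(1+c)) x^{-r} + (1/(1+c)) (x+1)^{-r}` of order `r` has a zero of its holomorphic
extension in the right half-plane, and hence is not logarithmically completely monotonic. -/
theorem stmt4 (r : ℝ) (hr : 2 < r) :
    ∃ c : ℝ, 0 < c ∧
      (∃ z : ℂ, 0 < z.re ∧
        ((c / (1 + c) : ℝ) : ℂ) * z ^ (-(r : ℂ)) +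
          ((1 / (1 + c) : ℝ) : ℂ) * (z + 1) ^ (-(r : ℂ)) = 0) ∧
      IsGenStieltjes r
        (fun x => c / (1 + c) * x ^ (-r) + 1 / (1 + c) * (x + 1) ^ (-r)) ∧
      ¬ LogCompletelyMonotonic
        (fun x => c / (1 + c) * x ^ (-r) + 1 / (1 + c) * (x + 1) ^ (-r)) := by
  obtain ⟨c, hc, z, hz, hcpow⟩ := exists_re_pos_add_one_cpow_neg_eq hr
  have hzero : ((c / (1 + c) : ℝ) : ℂ) * z ^ (-(r : ℂ)) +
      ((1 / (1 + c) : ℝ) : ℂ) * (z + 1) ^ (-(r : ℂ)) = 0 := by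
    rw [hcpow]
    push_cast
    ring
  have hstieltjes : IsGenStieltjes r
      (fun x => c / (1 + c) * x ^ (-r) + 1 / (1 + c) * (x + 1) ^ (-r)) :=
    ((IsGenStieltjes.rpow_neg r).const_mul (by positivity)).add
      ((IsGenStieltjes.add_rpow_neg r zero_le_one).const_mul (by positivity))
  exact ⟨c, hc, ⟨z, hz, hzero⟩, hstieltjes, not_logCompletelyMonotonic_of_cpow_sum_eq_zero hz hzero⟩
end
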